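/- arXiv:1709.02006 — 2 statements merged into one kernel-verified Lean document; each statement's English description precedes it below -/
import Mathlib

section
/- With C = u²v²w²μ⁹, the field K_C is not k-rational (the del Pezzo surface of degree 2 given by A x⁴ + 2B x²y² + A y⁴ + C z⁴ = t² is not k-rational). -/
/-!
Write `t² = μ f` with `f = w² x⁴ + 2 (u² - v²) x² y² + w² y⁴ + c₀²`, `c₀ = u v w μ⁴`, and let
`α = (v + i u) / w`, `α' = (v - i u) / w`. The lines `l : x + y = u μ²` and `l' : x = α y` touch the
branch curve with even multiplicity everywhere, and over each of them the surface splits into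
two curves conjugate over `k(√μ)`. Hence the quaternion algebra `(l / l', μ)` over the function field
is unramified on the surface, and the theorem says that it is a nonconstant Brauer class, which a
rational surface does not have. Everything is phrased with norms `a² - μ b²`.

*If the field is rational, then `l / l'` is a constant times a norm.* In homogeneous
coordinates `X, Y, W` taken from the unique factorization domain `k[a, b]`, both `l` and `l'` divide
a norm, with a cofactor sharing no prime that stays prime over `k(√μ)`
(`bitangent_ratio_eq_const_mul_norm`). Such a divisor of a norm is itself a constant times a norm
(`eq_const_mul_norm_of_mul_eq_norm`), because a prime dividing a norm nontrivially is one
(`split_prime_is_norm`).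

*In the function field of the surface, `l / l'` is not a constant times a norm.* Since every element is
`p + q t` with `p, q ∈ k(x, y)`, such a representation gives one of
`c l l' (P² - f Q²)` as a norm of polynomials in `x, y`. With `x = s y` these become polynomials in
`y` over `F = k(s)`, and taking the product with the conjugate under `y ↦ -y` leaves an identity in
`Z = y²`. There `l l'` contributes a square times `Z ((s + 1)² Z - u² μ⁴)`, which up to a factor
`κ = κ₀ (w (s² + 1) + 2 v s)` and squares is a value of the form `H² - f` (`conic_bundle_obstruction`).
So `κ (P² - f Q²)`, with `f = c₀² + R Z²` and `R = R₁ R₂ ∈ k[s]`, is a norm from `F(Z)(√μ)`. The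
Cassels–Pfister theorem (`cassels_pfister`) applied to the ternary form `⟨1, -μ, -κ⟩` replaces this by
a solution of degree at most one in `Z`, and comparing coefficients makes `κ R`, up to squares, a
norm from `F(√μ)` (`neg_mul_sq_is_norm_of_represents`). Both the isotropy of the ternary form and this
conclusion contradict the valuation of `k(s)` at a simple root in `k` of `R₂`, respectively `R₁`
(`fraction_eq_zero_of_norm_eq_linear_mul_sq`).
-/

/-- A field extension `K` of `k` (of transcendence degree 2) is *k-rational* if it is
isomorphic as a `k`-algebra to the field of rational functions in two variables over `k`. -/
def IsKRational (k : Type*) (K : Type*) [Field k] [Field K] [Algebra k K] : Prop :=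
  Nonempty (K ≃ₐ[k] FractionRing (MvPolynomial (Fin 2) k))

/-! ### Divisors of norms from `k(√μ)` in polynomial rings -/

section SplitPrimes

open MvPolynomial

variable {k : Type*} [Field k] {μ : k}

/-- Polynomials over `k(√μ)`, encoded as `QuadraticAlgebra k μ 0` with `omega = √μ`, split as
`P + √μ Q` with `P`, `Q` over `k`. -/
theorem exists_re_im_parts {σ : Type*} (p : MvPolynomial σ (QuadraticAlgebra k μ 0)) :
    ∃ P Q : MvPolynomial σ k,
      p = map (algebraMap k _) P + C QuadraticAlgebra.omega * map (algebraMap k _) Q := by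
  induction p using MvPolynomial.induction_on with
  | C a =>
    refine ⟨C a.re, C a.im, ?_⟩
    rw [map_C, map_C, ← C_mul, ← C_add]
    congr 1
    ext <;> simp
  | add p q hp hq =>
    obtain ⟨P, Q, rfl⟩ := hp
    obtain ⟨P', Q', rfl⟩ := hq
    exact ⟨P + P', Q + Q', by simp only [map_add]; ring⟩
  | mul_X p n hp =>
    obtain ⟨P, Q, rfl⟩ := hp
    exact ⟨P * X n, Q * X n, by simp only [map_mul, map_X]; ring⟩

theorem re_im_parts_inj {σ : Type*} {P Q P' Q' : MvPolynomial σ k}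
    (h : map (algebraMap k (QuadraticAlgebra k μ 0)) P
        + C QuadraticAlgebra.omega * map (algebraMap k _) Q
      = map (algebraMap k _) P' + C QuadraticAlgebra.omega * map (algebraMap k _) Q') :
    P = P' ∧ Q = Q' := by
  constructor
  · ext m
    have := congrArg (fun p => (coeff m p).re) h
    simpa [coeff_map] using this
  · ext m
    have := congrArg (fun p => (coeff m p).im) h
    simpa [coeff_map] using this

theorem C_omega_sq {σ : Type*} :
    (C (QuadraticAlgebra.omega : QuadraticAlgebra k μ 0) : MvPolynomial σ _) ^ 2
      = map (algebraMap k _) (C μ) := by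
  rw [map_C, ← C_pow]
  congr 1
  ext <;> simp [sq]

/-- A prime of `k[X]` dividing a norm `a² - μ b²` without dividing `b` is a constant times a norm:
it cannot remain prime over `k(√μ)`, and the norm of a proper factor is then associated to it. -/
theorem split_prime_is_norm (hμ : ¬ IsSquare μ) {σ : Type*}
    {π a b : MvPolynomial σ k} (hπ : Prime π) (hdvd : π ∣ a ^ 2 - C μ * b ^ 2)
    (hb : ¬ π ∣ b) :
    ∃ (c : k) (P Q : MvPolynomial σ k), c ≠ 0 ∧ π = C c * (P ^ 2 - C μ * Q ^ 2) := by
  classical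
  have : Fact (∀ r : k, r ^ 2 ≠ μ + 0 * r) :=
    ⟨fun r hr => hμ ⟨r, by rw [← sq, hr]; ring⟩⟩
  set φ : MvPolynomial σ k →+* MvPolynomial σ (QuadraticAlgebra k μ 0) :=
    map (algebraMap k _) with hφ
  have hω := C_omega_sq (k := k) (μ := μ) (σ := σ)
  set ω : MvPolynomial σ (QuadraticAlgebra k μ 0) := C QuadraticAlgebra.omega with hωdef
  have hφinj : Function.Injective φ :=
    map_injective _ (algebraMap k (QuadraticAlgebra k μ 0)).injective
  have hmulpart : ∀ P Q P' Q' : MvPolynomial σ k, (φ P + ω * φ Q) * (φ P' + ω * φ Q')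
      = φ (P * P' + C μ * Q * Q') + ω * φ (P * Q' + Q * P') := by
    intro P Q P' Q'
    simp only [map_add, map_mul]
    linear_combination (φ Q * φ Q') * hω
  -- an element of `A' = k(√μ)[X]` divisible by `π` has both of its parts divisible by `π`
  have hdvdpart : ∀ P Q, φ π ∣ φ P + ω * φ Q → π ∣ Q := by
    rintro P Q ⟨r, hr⟩
    obtain ⟨R, S, rfl⟩ := exists_re_im_parts r
    have h2 : φ P + ω * φ Q = φ (π * R) + ω * φ (π * S) := by
      rw [hr]; simp only [map_mul]; ring
    exact ⟨S, (re_im_parts_inj h2).2⟩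
  have hnp : ¬ Prime (φ π) := by
    intro hp
    have h1 : φ π ∣ (φ a + ω * φ b) * (φ a + ω * φ (-b)) := by
      rw [hmulpart]
      have : φ (a * a + C μ * b * -b) + ω * φ (a * -b + b * a) = φ (a ^ 2 - C μ * b ^ 2) := by
        have : a * -b + b * a = 0 := by ring
        rw [this, map_zero, mul_zero, add_zero]; congr 1; ring
      rw [this]; exact map_dvd φ hdvd
    rcases hp.dvd_or_dvd h1 with h | h
    · exact hb (hdvdpart _ _ h)
    · exact hb ((dvd_neg).1 (hdvdpart _ _ h))
  rw [← irreducible_iff_prime, irreducible_iff] at hnp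
  have hunit : ∀ P Q, IsUnit (P ^ 2 - C μ * Q ^ 2) → IsUnit (φ P + ω * φ Q) := by
    intro P Q h
    refine isUnit_of_dvd_unit ?_ (h.map φ)
    refine ⟨φ P + ω * φ (-Q), ?_⟩
    rw [hmulpart]
    have : P * -Q + Q * P = 0 := by ring
    rw [this, map_zero, mul_zero, add_zero]; congr 1; ring
  have hnu : ¬ IsUnit (φ π) := by
    intro hu
    obtain ⟨r, hr⟩ := hu.exists_right_inv
    obtain ⟨R, S, rfl⟩ := exists_re_im_parts r
    have h2 : φ (π * R) + ω * φ (π * S) = φ 1 + ω * φ 0 := by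
      rw [map_one, map_zero, mul_zero, add_zero, ← hr]; simp only [map_mul]; ring
    exact hπ.not_isUnit (IsUnit.of_mul_eq_one _ (re_im_parts_inj h2).1)
  push Not at hnp
  obtain ⟨r, s, hrs, hr, hs⟩ := hnp hnu
  obtain ⟨P, Q, rfl⟩ := exists_re_im_parts r
  obtain ⟨P', Q', rfl⟩ := exists_re_im_parts s
  have h3 : φ π + ω * φ 0 = φ (P * P' + C μ * Q * Q') + ω * φ (P * Q' + Q * P') := by
    rw [← hmulpart, hrs]; simp [hφ, hωdef]
  obtain ⟨h4, h5⟩ := re_im_parts_inj h3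
  have h6 : (P ^ 2 - C μ * Q ^ 2) * (P' ^ 2 - C μ * Q' ^ 2) = π * π := by
    linear_combination (-(P * P' + C μ * Q * Q') - π) * h4 + (C μ * (P * Q' + Q * P')) * h5
  have hass : ∀ x y : MvPolynomial σ k, ¬ IsUnit y → x * y = π * π → π ∣ x → Associated π x := by
    rintro x y hy hxy ⟨z, rfl⟩
    have h7 : z * y = π := mul_left_cancel₀ hπ.ne_zero (by rw [← hxy]; ring)
    rcases hπ.irreducible.isUnit_or_isUnit h7.symm with h | h
    · exact (associated_mul_unit_right π z h)
    · exact absurd h hy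
  have hu1 : ¬ IsUnit (P ^ 2 - C μ * Q ^ 2) := fun h => hr (hunit _ _ h)
  have hu2 : ¬ IsUnit (P' ^ 2 - C μ * Q' ^ 2) := fun h => hs (hunit _ _ h)
  have key : ∀ P Q : MvPolynomial σ k, Associated π (P ^ 2 - C μ * Q ^ 2) →
      ∃ (c : k) (P Q : MvPolynomial σ k), c ≠ 0 ∧ π = C c * (P ^ 2 - C μ * Q ^ 2) := by
    intro P Q h
    obtain ⟨e, he⟩ := h.symm
    obtain ⟨c, hc, hce⟩ := (MvPolynomial.isUnit_iff_eq_C_of_isReduced).1 e.isUnit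
    exact ⟨c, P, Q, hc.ne_zero, by rw [← he, hce]; ring⟩
  rcases hπ.dvd_or_dvd (Dvd.intro _ h6.symm) with h | h
  · exact key P Q (hass _ _ hu2 h6 h)
  · exact key P' Q' (hass _ _ hu1 (by rw [mul_comm, h6]) h)

/-- If `l m` is a norm and no prime that remains prime over `k(√μ)` divides both `l` and `m`, then
`l` is a constant times a norm. The primes staying prime are characterized by dividing `b` whenever
they divide `a² - μ b²`. The proof removes one prime factor of `l` at a time; primes staying prime
occur in `l` to even order, the others are moved to `m`. -/
theorem eq_const_mul_norm_of_mul_eq_norm (hμ : ¬ IsSquare μ) {σ : Type*}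
    (l : MvPolynomial σ k) (hl : l ≠ 0) :
    ∀ m a b : MvPolynomial σ k, l * m = a ^ 2 - C μ * b ^ 2 →
      (∀ π, Prime π → (∀ a b, π ∣ a ^ 2 - C μ * b ^ 2 → π ∣ b) → π ∣ l → π ∣ m → False) →
      ∃ (c : k) (P Q : MvPolynomial σ k), c ≠ 0 ∧ l = C c * (P ^ 2 - C μ * Q ^ 2) := by
  have hwf := wellFounded_dvdNotUnit (α := MvPolynomial σ k)
  induction l using hwf.induction with
  | _ l ih =>
  intro m a b hab hcop
  by_cases hu : IsUnit l
  · obtain ⟨c, hc, rfl⟩ := (MvPolynomial.isUnit_iff_eq_C_of_isReduced).1 hu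
    exact ⟨c, 1, 0, hc.ne_zero, by ring⟩
  obtain ⟨π, hπi, l', rfl⟩ := WfDvdMonoid.exists_irreducible_factor hu hl
  have hπ := hπi.prime
  have hl' : l' ≠ 0 := right_ne_zero_of_mul hl
  by_cases hin : ∀ a b, π ∣ a ^ 2 - C μ * b ^ 2 → π ∣ b
  · have hd : π ∣ a ^ 2 - C μ * b ^ 2 := ⟨l' * m, by rw [← hab]; ring⟩
    obtain ⟨b', rfl⟩ := hin a b hd
    have ha : π ∣ a ^ 2 := by
      have := dvd_add hd (Dvd.intro (C μ * π * b' ^ 2) rfl)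
      convert this using 1; ring
    obtain ⟨a', rfl⟩ := hπ.dvd_of_dvd_pow ha
    have h1 : l' * m = π * (a' ^ 2 - C μ * b' ^ 2) :=
      mul_left_cancel₀ hπ.ne_zero (by linear_combination hab)
    have hm : ¬ π ∣ m := fun h => hcop π hπ hin (Dvd.intro _ rfl) h
    obtain ⟨l2, rfl⟩ := (hπ.dvd_or_dvd (Dvd.intro _ h1.symm)).resolve_right hm
    have h2 : l2 * m = a' ^ 2 - C μ * b' ^ 2 :=
      mul_left_cancel₀ hπ.ne_zero (by linear_combination h1)
    have hl2 : l2 ≠ 0 := right_ne_zero_of_mul hl'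
    obtain ⟨c, P, Q, hc, rfl⟩ := ih l2
      ⟨hl2, π * π, fun h => hπ.not_isUnit (isUnit_of_mul_isUnit_left h), by ring⟩ hl2 m a' b' h2
      (fun ρ hρ hρi h3 h4 => hcop ρ hρ hρi (dvd_mul_of_dvd_right (dvd_mul_of_dvd_right h3 _) _) h4)
    exact ⟨c, π * P, π * Q, hc, by ring⟩
  · push Not at hin
    obtain ⟨a₁, b₁, h1, h2⟩ := hin
    obtain ⟨c₁, P₁, Q₁, hc₁, hN⟩ := split_prime_is_norm hμ hπ h1 h2
    obtain ⟨c, P, Q, hc, rfl⟩ := ih l' ⟨hl', π, hπ.not_isUnit, by ring⟩ hl' (π * m) a b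
      (by rw [← hab]; ring) (by
        intro ρ hρ hρi h3 h4
        rcases hρ.dvd_or_dvd h4 with h5 | h5
        · have := (hρ.irreducible.associated_of_dvd hπi h5).symm
          exact h2 (this.dvd.trans (hρi a₁ b₁ (this.symm.dvd.trans h1)))
        · exact hcop ρ hρ hρi (dvd_mul_of_dvd_right h3 _) h5)
    refine ⟨c₁ * c, P₁ * P + C μ * Q₁ * Q, P₁ * Q + Q₁ * P, mul_ne_zero hc₁ hc, ?_⟩
    rw [C_mul]
    linear_combination (C c * (P ^ 2 - C μ * Q ^ 2)) * hN

end SplitPrimes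

/-! ### The ratio of two bitangents on a rational surface -/

section UnramifiedClass

open MvPolynomial

variable {k : Type*} [Field k] {μ : k}

theorem dvd_of_dvd_C_mul {σ : Type*} {π z : MvPolynomial σ k} {r : k} (hr : r ≠ 0)
    (h : π ∣ C r * z) : π ∣ z := by
  have h2 := dvd_mul_of_dvd_right h (C r⁻¹)
  rwa [← mul_assoc, ← C_mul, inv_mul_cancel₀ hr, C_1, one_mul] at h2

/-- Two rational functions have a common denominator `W` with `X = W x`, `Y = W y` and `W` without
a common prime factor; `W` is taken minimal for divisibility. -/
theorem exists_coprime_homogeneous_coords {σ : Type*} {L : Type*} [Field L] [Algebra (MvPolynomial σ k) L]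
    [IsFractionRing (MvPolynomial σ k) L] (x y : L) :
    ∃ X Y W : MvPolynomial σ k, W ≠ 0 ∧
      algebraMap (MvPolynomial σ k) L W * x = algebraMap (MvPolynomial σ k) L X ∧
      algebraMap (MvPolynomial σ k) L W * y = algebraMap (MvPolynomial σ k) L Y ∧
      ∀ π, Prime π → π ∣ X → π ∣ Y → π ∣ W → False := by
  have hinj := IsFractionRing.injective (MvPolynomial σ k) L
  have hstart : ∃ W : MvPolynomial σ k, W ≠ 0 ∧
      ∃ X Y, algebraMap (MvPolynomial σ k) L W * x = algebraMap (MvPolynomial σ k) L X ∧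
        algebraMap (MvPolynomial σ k) L W * y = algebraMap (MvPolynomial σ k) L Y := by
    obtain ⟨X, D, hD, rfl⟩ := IsFractionRing.div_surjective (A := MvPolynomial σ k) x
    obtain ⟨Y, E, hE, rfl⟩ := IsFractionRing.div_surjective (A := MvPolynomial σ k) y
    have hD0 := nonZeroDivisors.ne_zero hD
    have hE0 := nonZeroDivisors.ne_zero hE
    have hD' : algebraMap (MvPolynomial σ k) L D ≠ 0 :=
      (map_ne_zero_iff _ hinj).2 hD0
    have hE' : algebraMap (MvPolynomial σ k) L E ≠ 0 :=
      (map_ne_zero_iff _ hinj).2 hE0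
    refine ⟨D * E, mul_ne_zero hD0 hE0, X * E, Y * D, ?_, ?_⟩
    · rw [map_mul, map_mul]; field_simp
    · rw [map_mul, map_mul]; field_simp
  -- a denominator minimal for strict divisibility
  obtain ⟨W, ⟨hW, X, Y, hX, hY⟩, hmin⟩ :=
    (wellFounded_dvdNotUnit (α := MvPolynomial σ k)).has_min
      {W | W ≠ 0 ∧ ∃ X Y,
        algebraMap (MvPolynomial σ k) L W * x = algebraMap (MvPolynomial σ k) L X ∧
        algebraMap (MvPolynomial σ k) L W * y = algebraMap (MvPolynomial σ k) L Y} hstart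
  refine ⟨X, Y, W, hW, hX, hY, ?_⟩
  rintro π hπ ⟨X', rfl⟩ ⟨Y', rfl⟩ ⟨W', rfl⟩
  have hW' : W' ≠ 0 := right_ne_zero_of_mul hW
  have hπ' : algebraMap (MvPolynomial σ k) L π ≠ 0 :=
    (map_ne_zero_iff _ hinj).2 hπ.ne_zero
  refine hmin W' ⟨hW', X', Y', ?_, ?_⟩ ⟨hW', π, hπ.not_isUnit, mul_comm _ _⟩
  · exact mul_left_cancel₀ hπ' (by rw [map_mul, map_mul] at hX; rw [← hX]; ring)
  · exact mul_left_cancel₀ hπ' (by rw [map_mul, map_mul] at hY; rw [← hY]; ring)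

/-- If the surface `t² = μ f(x, y)` is parametrized by a purely transcendental extension `L` of `k`,
then the ratio of `x + y - u μ²` and `x - α y` is a constant times a norm from `L(√μ)`. -/
theorem bitangent_ratio_eq_const_mul_norm [CharZero k] (hμ : ¬ IsSquare μ) {u v w α α' : k}
    (hu : u ≠ 0) (hv : v ≠ 0) (hw : w ≠ 0) (huvw : w ^ 2 = u ^ 2 + v ^ 2)
    (hα : w * (α + α') = 2 * v) (hα' : α * α' = 1) (hne : α ≠ α')
    {σ : Type*} {L : Type*} [Field L] [Algebra (MvPolynomial σ k) L]
    [IsFractionRing (MvPolynomial σ k) L] 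
    [Algebra k L] [IsScalarTower k (MvPolynomial σ k) L] (x y t : L)
    (ht : t ^ 2 = algebraMap k L μ * (algebraMap k L w ^ 2 * x ^ 4
      + 2 * (algebraMap k L u ^ 2 - algebraMap k L v ^ 2) * x ^ 2 * y ^ 2
      + algebraMap k L w ^ 2 * y ^ 4 + algebraMap k L (u * v * w * μ ^ 4) ^ 2))
    (hl : x + y - algebraMap k L (u * μ ^ 2) ≠ 0) (hl' : x - algebraMap k L α * y ≠ 0) :
    ∃ (c : k) (a b : L), c ≠ 0 ∧
      x + y - algebraMap k L (u * μ ^ 2)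
        = algebraMap k L c * (x - algebraMap k L α * y) * (a ^ 2 - algebraMap k L μ * b ^ 2) := by
  have hμ0 : μ ≠ 0 := fun h => hμ (h ▸ IsSquare.zero)
  have hinj : Function.Injective (algebraMap (MvPolynomial σ k) L) := IsFractionRing.injective _ _
  have hC : ∀ r : k, algebraMap k L r = algebraMap (MvPolynomial σ k) L (C r) := fun r => by
    rw [IsScalarTower.algebraMap_apply k (MvPolynomial σ k) L, MvPolynomial.algebraMap_eq]
  simp only [hC] at ht hl hl' ⊢
  set φ := algebraMap (MvPolynomial σ k) L with hφ
  obtain ⟨X, Y, W, hW, hX, hY, hcop⟩ :=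
    exists_coprime_homogeneous_coords (k := k) (σ := σ) x y
  rw [← hφ] at hX hY
  have hW' : φ W ≠ 0 := (map_ne_zero_iff _ hinj).2 hW
  -- `t W²` is integral, hence a polynomial
  obtain ⟨T, hT⟩ : ∃ T, φ T = t * φ W ^ 2 := by
    refine IsIntegrallyClosed.exists_algebraMap_eq_of_isIntegral_pow (R := MvPolynomial σ k)
      (n := 2) two_pos ?_
    have : (t * φ W ^ 2) ^ 2 = φ (C μ * (C w ^ 2 * X ^ 4
        + 2 * (C u ^ 2 - C v ^ 2) * X ^ 2 * Y ^ 2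
        + C w ^ 2 * Y ^ 4 + C (u * v * w * μ ^ 4) ^ 2 * W ^ 4)) := by
      simp only [map_add, map_mul, map_sub, map_pow, ← hX, ← hY, map_ofNat] at ht ⊢
      linear_combination (φ W ^ 4) * ht
    rw [this]
    exact isIntegral_algebraMap
  have hF : T ^ 2 = C μ * (C w ^ 2 * X ^ 4
        + 2 * (C u ^ 2 - C v ^ 2) * X ^ 2 * Y ^ 2
        + C w ^ 2 * Y ^ 4 + (C u * C v * C w * C μ ^ 4) ^ 2 * W ^ 4) := by
    apply hinj
    simp only [map_add, map_mul, map_sub, map_pow, ← hX, ← hY, map_ofNat, hT] at ht ⊢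
    linear_combination (φ W ^ 4) * ht
  have huvw' : (C w : MvPolynomial σ k) ^ 2 = C u ^ 2 + C v ^ 2 := by
    rw [← C_pow, huvw]; simp
  have hαC : (C w : MvPolynomial σ k) * (C α + C α') = 2 * C v := by
    rw [← C_add, ← C_mul, hα, C_mul, map_ofNat]
  have hαC' : (C α : MvPolynomial σ k) * C α' = 1 := by
    rw [← C_mul, hα', C_1]
  have hsq : ∀ π : MvPolynomial σ k, Prime π → (∀ a b, π ∣ a ^ 2 - C μ * b ^ 2 → π ∣ b) →
      ∀ l m a b, l * m = a ^ 2 - C μ * b ^ 2 → π ∣ l → π ∣ b := fun π _ hin l m a b h hd =>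
    hin a b (h ▸ dvd_mul_of_dvd_left hd m)
  -- the bitangent `x + y = u μ² z`, on which `u² f` is the square of `2 u² x y - w² (x + y)²`
  have h1 : (X + Y - C (u * μ ^ 2) * W) * (-(C (μ * (w * v) ^ 2) * (X + Y + C (u * μ ^ 2) * W) *
      ((X + Y) ^ 2 + C (u * μ ^ 2) ^ 2 * W ^ 2)))
      = (C u * T) ^ 2 - C μ * (2 * C u ^ 2 * X * Y - C w ^ 2 * (X + Y) ^ 2) ^ 2 := by
    simp only [map_mul, map_pow]
    linear_combination (-C u ^ 2) * hF + (C μ * (C w ^ 2 * (X + Y) ^ 4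
      - 2 * C u ^ 2 * X ^ 2 * Y ^ 2)) * huvw'
  have hl1 : X + Y - C (u * μ ^ 2) * W ≠ 0 := by
    intro h
    apply hl
    apply mul_left_cancel₀ hW'
    have := congrArg φ h
    simp only [map_add, map_sub, map_mul φ (C _), ← hX, ← hY, map_zero] at this
    rw [mul_zero]; linear_combination this
  have hl2 : X - C α * Y ≠ 0 := by
    intro h
    apply hl'
    apply mul_left_cancel₀ hW'
    have := congrArg φ h
    simp only [map_sub, map_mul φ (C _), ← hX, ← hY, map_zero] at this
    rw [mul_zero]; linear_combination this
  obtain ⟨c₁, P₁, Q₁, hc₁, e₁⟩ := eq_const_mul_norm_of_mul_eq_norm hμ _ hl1 _ _ _ h1 (by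
    intro π hπ hin hd1 hd2
    have hd3 := hsq π hπ hin _ _ _ _ h1 hd1
    have hWd : π ∣ W := by
      rw [dvd_neg, mul_assoc] at hd2
      have h2d : (2 * (u * μ ^ 2)) ≠ 0 := by simp [hu, hμ0]
      rcases hπ.dvd_or_dvd (dvd_of_dvd_C_mul (by simp [hμ0, hw, hv]) hd2) with h | h
      · refine dvd_of_dvd_C_mul h2d (?_ : π ∣ C (2 * (u * μ ^ 2)) * W)
        convert dvd_sub h hd1 using 1
        simp only [C_mul, map_ofNat]; ring
      · refine hπ.dvd_of_dvd_pow (n := 2) (dvd_of_dvd_C_mul (r := 2 * (u * μ ^ 2) ^ 2)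
          (by simp [hu, hμ0]) ?_)
        convert dvd_sub h (dvd_mul_of_dvd_left hd1 (X + Y + C (u * μ ^ 2) * W)) using 1
        simp only [C_mul, map_ofNat, map_pow]; ring
    have hp : π ∣ X + Y := by
      convert dvd_add hd1 (dvd_mul_of_dvd_right hWd (C (u * μ ^ 2))) using 1; ring
    have hXY : π ∣ X * Y := by
      refine dvd_of_dvd_C_mul (r := 2 * u ^ 2) (by simp [hu]) ?_
      convert dvd_add hd3 (dvd_mul_of_dvd_right hp (C w ^ 2 * (X + Y))) using 1
      simp only [C_mul, map_ofNat, map_pow]; ring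
    rcases hπ.dvd_or_dvd hXY with h | h
    · exact hcop π hπ h ((dvd_add_right h).1 hp) hWd
    · exact hcop π hπ ((dvd_add_left h).1 hp) h hWd)
  -- the bitangent `x = α y`, on which `f` is the square of `u v w μ⁴ z²`
  have h2 : (X - C α * Y) * (C (μ * w ^ 2) * ((X - C α' * Y) * ((X + C α * Y) * (X + C α' * Y))))
      = T ^ 2 - C μ * (C (u * v * w * μ ^ 4) * W ^ 2) ^ 2 := by
    simp only [map_mul, map_pow]
    linear_combination (-1) * hF + C μ * (2 * X ^ 2 * Y ^ 2 * huvw'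
      - X ^ 2 * Y ^ 2 * (C w * (C α + C α') + 2 * C v) * hαC
      + (2 * C w ^ 2 * X ^ 2 * Y ^ 2 + C w ^ 2 * (C α * C α' + 1) * Y ^ 4) * hαC')
  obtain ⟨c₂, P₂, Q₂, hc₂, e₂⟩ := eq_const_mul_norm_of_mul_eq_norm hμ _ hl2 _ _ _ h2 (by
    intro π hπ hin hd1 hd2
    have hd3 := hsq π hπ hin _ _ _ _ h2 hd1
    have hWd : π ∣ W := hπ.dvd_of_dvd_pow
      (dvd_of_dvd_C_mul (r := u * v * w * μ ^ 4) (by simp [hu, hv, hw, hμ0]) hd3)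
    have hα0 : α ≠ 0 := left_ne_zero_of_mul (hα' ▸ one_ne_zero)
    have hαs : α + α' ≠ 0 := right_ne_zero_of_mul (a := w) (by rw [hα]; simp [hv])
    have hYd : π ∣ Y := by
      rcases hπ.dvd_or_dvd (dvd_of_dvd_C_mul (by simp [hμ0, hw]) hd2) with h | h
      · refine dvd_of_dvd_C_mul (sub_ne_zero.2 hne) (?_ : π ∣ C (α - α') * Y)
        convert dvd_sub h hd1 using 1
        rw [C_sub]; ring
      rcases hπ.dvd_or_dvd h with h | h
      · refine dvd_of_dvd_C_mul (r := 2 * α) (by simp [hα0]) ?_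
        convert dvd_sub h hd1 using 1
        simp only [C_mul, map_ofNat]; ring
      · refine dvd_of_dvd_C_mul hαs ?_
        convert dvd_sub h hd1 using 1
        rw [C_add]; ring
    have hXd : π ∣ X := by
      convert dvd_add hd1 (dvd_mul_of_dvd_right hYd (C α)) using 1; ring
    exact hcop π hπ hXd hYd hWd)
  have hN₂ : φ P₂ ^ 2 - φ (C μ) * φ Q₂ ^ 2 ≠ 0 := by
    have : φ (P₂ ^ 2 - C μ * Q₂ ^ 2) ≠ 0 := (map_ne_zero_iff _ hinj).2
      (right_ne_zero_of_mul (e₂ ▸ hl2))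
    simpa using this
  have hc₂' : φ (C c₂) ≠ 0 := (map_ne_zero_iff _ hinj).2 (by simpa using hc₂)
  have e₁' : φ W * (x + y - φ (C (u * μ ^ 2))) = φ (C c₁) * (φ P₁ ^ 2 - φ (C μ) * φ Q₁ ^ 2) := by
    have := congrArg φ e₁
    simp only [map_add, map_sub, map_mul φ, map_pow φ, ← hX, ← hY] at this
    linear_combination this
  have e₂' : φ W * (x - φ (C α) * y) = φ (C c₂) * (φ P₂ ^ 2 - φ (C μ) * φ Q₂ ^ 2) := by
    have := congrArg φ e₂
    simp only [map_sub, map_mul φ, map_pow φ, ← hX, ← hY] at this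
    linear_combination this
  set N₂ := φ P₂ ^ 2 - φ (C μ) * φ Q₂ ^ 2 with hN₂def
  refine ⟨c₁ / c₂, (φ P₁ * φ P₂ + φ (C μ) * φ Q₁ * φ Q₂) / N₂, (φ P₁ * φ Q₂ + φ Q₁ * φ P₂) / N₂,
    div_ne_zero hc₁ hc₂, ?_⟩
  have hcc : φ (C (c₁ / c₂)) * φ (C c₂) = φ (C c₁) := by
    rw [← map_mul, ← C_mul, div_mul_cancel₀ _ hc₂]
  apply mul_left_cancel₀ hW'
  rw [e₁']
  have : φ W * (φ (C (c₁ / c₂)) * (x - φ (C α) * y) *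
      (((φ P₁ * φ P₂ + φ (C μ) * φ Q₁ * φ Q₂) / N₂) ^ 2
        - φ (C μ) * ((φ P₁ * φ Q₂ + φ Q₁ * φ P₂) / N₂) ^ 2))
      = φ (C (c₁ / c₂)) * (φ W * (x - φ (C α) * y)) *
      (((φ P₁ * φ P₂ + φ (C μ) * φ Q₁ * φ Q₂) / N₂) ^ 2
        - φ (C μ) * ((φ P₁ * φ Q₂ + φ Q₁ * φ P₂) / N₂) ^ 2) := by ring
  rw [this, e₂', ← mul_assoc, hcc]
  have h3 : (φ P₁ * φ P₂ + φ (C μ) * φ Q₁ * φ Q₂) ^ 2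
      - φ (C μ) * (φ P₁ * φ Q₂ + φ Q₁ * φ P₂) ^ 2
      = (φ P₁ ^ 2 - φ (C μ) * φ Q₁ ^ 2) * N₂ := by rw [hN₂def]; ring
  rw [div_pow, div_pow, mul_div_assoc', ← sub_div, h3]
  field_simp

end UnramifiedClass

/-! ### The Cassels–Pfister theorem for a ternary form -/

section CasselsPfister

open Polynomial

variable {F : Type*} [Field F] {μ κ : F}

/-- For an anisotropic form the top coefficients of the entries cannot cancel, so a value of degree
at most `2 m` comes from entries of degree at most `m`. -/
theorem natDegree_le_of_form_natDegree_le
    (han : ∀ a b c : F, a ^ 2 - μ * b ^ 2 - κ * c ^ 2 = 0 → a = 0 ∧ b = 0 ∧ c = 0)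
    {a b c : F[X]} {m : ℕ} (h : (a ^ 2 - C μ * b ^ 2 - C κ * c ^ 2).natDegree ≤ 2 * m) :
    a.natDegree ≤ m ∧ b.natDegree ≤ m ∧ c.natDegree ≤ m := by
  have hlow : ∀ {p : F[X]} {N : ℕ}, p.natDegree ≤ N + 1 → p.coeff (N + 1) = 0 →
      p.natDegree ≤ N := by
    intro p N h1 h2
    refine natDegree_le_iff_coeff_eq_zero.2 fun j hj => ?_
    rcases Nat.lt_or_ge (N + 1) j with h3 | h3
    · exact coeff_eq_zero_of_natDegree_lt (h1.trans_lt h3)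
    · rwa [show j = N + 1 by omega]
  have key : ∀ d : ℕ, a.natDegree ≤ m + d ∧ b.natDegree ≤ m + d ∧ c.natDegree ≤ m + d →
      a.natDegree ≤ m ∧ b.natDegree ≤ m ∧ c.natDegree ≤ m := by
    intro d
    induction d with
    | zero => exact id
    | succ d ih =>
      rintro ⟨ha, hb, hc⟩
      rw [← add_assoc] at ha hb hc
      have h0 : (a ^ 2 - C μ * b ^ 2 - C κ * c ^ 2).coeff (2 * (m + d + 1)) = 0 :=
        coeff_eq_zero_of_natDegree_lt (by omega)
      rw [coeff_sub, coeff_sub, coeff_C_mul, coeff_C_mul, coeff_pow_of_natDegree_le ha,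
        coeff_pow_of_natDegree_le hb, coeff_pow_of_natDegree_le hc] at h0
      obtain ⟨h1, h2, h3⟩ := han _ _ _ h0
      exact ih ⟨hlow ha h1, hlow hb h2, hlow hc h3⟩
  exact key (a.natDegree + b.natDegree + c.natDegree) ⟨by omega, by omega, by omega⟩

theorem polynomial_form_anisotropic
    (han : ∀ a b c : F, a ^ 2 - μ * b ^ 2 - κ * c ^ 2 = 0 → a = 0 ∧ b = 0 ∧ c = 0)
    {a b c : F[X]} (h : a ^ 2 - C μ * b ^ 2 - C κ * c ^ 2 = 0) : a = 0 ∧ b = 0 ∧ c = 0 := by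
  obtain ⟨ha, hb, hc⟩ := natDegree_le_of_form_natDegree_le (m := 0) han (by rw [h]; simp)
  rw [eq_C_of_natDegree_le_zero ha, eq_C_of_natDegree_le_zero hb,
    eq_C_of_natDegree_le_zero hc] at h ⊢
  simp only [← C_pow, ← C_mul, ← C_sub] at h
  simpa using han _ _ _ (C_eq_zero.1 h)

/-- Cassels–Pfister: if an anisotropic form `⟨1, -μ, -κ⟩` over `F` represents the polynomial `h`
over `F(X)` (with denominator `q`), it represents `h` over `F[X]`. Induction on a bound for the
degree of the denominator. -/
theorem cassels_pfister
    (han : ∀ a b c : F, a ^ 2 - μ * b ^ 2 - κ * c ^ 2 = 0 → a = 0 ∧ b = 0 ∧ c = 0)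
    {h : F[X]} (N : ℕ) : ∀ q a b c : F[X], q ≠ 0 → q.natDegree ≤ N →
      a ^ 2 - C μ * b ^ 2 - C κ * c ^ 2 = h * q ^ 2 →
      ∃ a b c : F[X], a ^ 2 - C μ * b ^ 2 - C κ * c ^ 2 = h := by
  induction N with
  | zero =>
    intro q a b c hq hN hv
    rw [eq_C_of_natDegree_le_zero hN] at hq hv
    have hq' : q.coeff 0 ≠ 0 := by simpa using hq
    set e := q.coeff 0
    have he : C e * C e⁻¹ = (1 : F[X]) := by rw [← C_mul, mul_inv_cancel₀ hq', C_1]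
    exact ⟨C e⁻¹ * a, C e⁻¹ * b, C e⁻¹ * c, by
      linear_combination (C e⁻¹) ^ 2 * hv + h * (C e * C e⁻¹ + 1) * he⟩
  | succ N ih =>
    intro q a b c hq hN hv
    -- round the vector `(a, b, c) / q` to a polynomial vector `(a', b', c')`
    set a' := a / q with ha'
    set b' := b / q with hb'
    set c' := c / q with hc'
    have hr : ∀ p : F[X], p = q * (p / q) + p % q := fun p => (EuclideanDomain.div_add_mod p q).symm
    have ha := hr a
    have hb := hr b
    have hc := hr c
    rw [← ha'] at ha
    rw [← hb'] at hb
    rw [← hc'] at hc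
    by_cases hr0 : (a % q) ^ 2 - C μ * (b % q) ^ 2 - C κ * (c % q) ^ 2 = 0
    · obtain ⟨h1, h2, h3⟩ := polynomial_form_anisotropic han hr0
      rw [h1, add_zero] at ha
      rw [h2, add_zero] at hb
      rw [h3, add_zero] at hc
      refine ⟨a', b', c', mul_left_cancel₀ (pow_ne_zero 2 hq) ?_⟩
      rw [ha, hb, hc] at hv
      linear_combination hv
    -- the second intersection point of the quadric with the line through the two vectors
    set S := a' ^ 2 - C μ * b' ^ 2 - C κ * c' ^ 2 - h with hS
    set T := 2 * (h * q - (a * a' - C μ * b * b' - C κ * c * c')) with hT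
    have hqq : q * (S * q + T) = (a % q) ^ 2 - C μ * (b % q) ^ 2 - C κ * (c % q) ^ 2 := by
      rw [show a % q = a - q * a' by rw [eq_sub_iff_add_eq', ← ha],
        show b % q = b - q * b' by rw [eq_sub_iff_add_eq', ← hb],
        show c % q = c - q * c' by rw [eq_sub_iff_add_eq', ← hc], hS, hT]
      linear_combination -hv
    have hq' : S * q + T ≠ 0 := fun h0 => hr0 (by rw [← hqq, h0, mul_zero])
    refine ih (S * q + T) (S * a + T * a') (S * b + T * b') (S * c + T * c') hq' ?_ ?_
    · by_cases hq0 : q.natDegree = 0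
      · exfalso
        have hmod : ∀ p : F[X], p % q = 0 := fun p =>
          (EuclideanDomain.mod_eq_zero).2 ((isUnit_iff_degree_eq_zero.2
            ((degree_eq_iff_natDegree_eq hq).2 hq0)).dvd)
        exact hr0 (by simp [hmod])
      have hd : ∀ p : F[X], (p % q).natDegree ≤ q.natDegree - 1 := fun p =>
        Nat.le_sub_one_of_lt (natDegree_mod_lt p hq0)
      have hd2 : ∀ p : F[X], ((p % q) ^ 2).natDegree ≤ 2 * (q.natDegree - 1) := fun p =>
        natDegree_pow_le_of_le 2 (hd p)
      have h1 : (q * (S * q + T)).natDegree ≤ 2 * (q.natDegree - 1) := by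
        rw [hqq]
        exact natDegree_sub_le_of_le (natDegree_sub_le_of_le (hd2 a)
          ((natDegree_C_mul_le _ _).trans (hd2 b))) ((natDegree_C_mul_le _ _).trans (hd2 c)) |>.trans
            (by simp)
      rw [natDegree_mul hq hq'] at h1
      omega
    · have hS' : a' ^ 2 - C μ * b' ^ 2 - C κ * c' ^ 2 = S + h := by rw [hS]; ring
      have hT' : 2 * (a * a' - C μ * b * b' - C κ * c * c') = 2 * h * q - T := by rw [hT]; ring
      linear_combination S * T * hT' + T ^ 2 * hS' + S ^ 2 * hv

/-- If `κ (p² - (c₀² + R X²) q²)` is a norm from `F[X][√μ]` with `q ≠ 0` and `⟨1, -μ, -κ⟩` is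
anisotropic, then `-κ R` is, up to a nonzero square, a norm from `F(√μ)`. -/
theorem neg_mul_sq_is_norm_of_represents [CharZero F]
    (han : ∀ a b c : F, a ^ 2 - μ * b ^ 2 - κ * c ^ 2 = 0 → a = 0 ∧ b = 0 ∧ c = 0)
    {c₀ R : F} (hc₀ : c₀ ≠ 0) {a b p q : F[X]} (hq : q ≠ 0)
    (h : a ^ 2 - C μ * b ^ 2 = C κ * (p ^ 2 - (C c₀ ^ 2 + C R * X ^ 2) * q ^ 2)) :
    ∃ g e₁ e₂ : F, g ≠ 0 ∧ -(κ * R) * g ^ 2 = e₁ ^ 2 - μ * e₂ ^ 2 := by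
  have hκ : κ ≠ 0 := by
    rintro rfl
    simpa using han 0 0 1 (by ring)
  obtain ⟨a, b, p, h⟩ := cassels_pfister han (h := -(C κ * (C (c₀ ^ 2) + C R * X ^ 2))) _
    q a b p hq le_rfl (by rw [C_pow]; linear_combination h)
  have hdeg : (a ^ 2 - C μ * b ^ 2 - C κ * p ^ 2).natDegree ≤ 2 * 1 := by
    rw [h]; compute_degree
  obtain ⟨ha, hb, hp⟩ := natDegree_le_of_form_natDegree_le han hdeg
  obtain ⟨a₁, a₀, rfl⟩ := exists_eq_X_add_C_of_natDegree_le_one ha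
  obtain ⟨b₁, b₀, rfl⟩ := exists_eq_X_add_C_of_natDegree_le_one hb
  obtain ⟨p₁, p₀, rfl⟩ := exists_eq_X_add_C_of_natDegree_le_one hp
  have h' : C (a₁ ^ 2 - μ * b₁ ^ 2 - κ * p₁ ^ 2 + κ * R) * X ^ 2
      + C (2 * (a₁ * a₀ - μ * b₁ * b₀ - κ * p₁ * p₀)) * X
      + C (a₀ ^ 2 - μ * b₀ ^ 2 - κ * p₀ ^ 2 + κ * c₀ ^ 2) = 0 := by
    simp only [map_add, map_sub, map_mul, map_pow, map_ofNat] at h ⊢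
    linear_combination h
  have h2 := congrArg (coeff · 2) h'
  have h1 := congrArg (coeff · 1) h'
  have h0 := congrArg (coeff · 0) h'
  simp [-map_add, -map_sub, -map_mul, -map_pow, coeff_X, coeff_C] at h0 h1 h2
  by_cases hpc : p₀ ^ 2 = c₀ ^ 2
  · obtain ⟨rfl, rfl, -⟩ := han a₀ b₀ 0 (by linear_combination h0 + κ * hpc)
    have hp₀ : p₀ ≠ 0 := fun h => hc₀ (by simpa [h] using hpc.symm)
    have hp₁ : p₁ = 0 := by
      rcases eq_or_ne p₁ 0 with h | h
      · exact h
      · exact absurd h1 (by simp [hκ, hp₀, h])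
    exact ⟨1, a₁, b₁, one_ne_zero, by rw [hp₁] at h2; linear_combination -h2⟩
  -- multiplicativity of the norm for `(a₀ + b₀ √μ) (a₁ - b₁ √μ)` turns the three coefficient
  -- equations into `(κ c₀ p₁)² - μ (a₁ b₀ - a₀ b₁)² = κ² R (c₀² - p₀²)`
  · refine ⟨κ * (c₀ ^ 2 - p₀ ^ 2), κ * c₀ * p₁ * a₀ + μ * (a₁ * b₀ - a₀ * b₁) * b₀,
      κ * c₀ * p₁ * b₀ + (a₁ * b₀ - a₀ * b₁) * a₀,
      mul_ne_zero hκ (sub_ne_zero.2 (Ne.symm hpc)), ?_⟩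
    have h1' : a₁ * a₀ - μ * b₁ * b₀ - κ * p₁ * p₀ = 0 := by simpa using h1
    linear_combination (-(a₀ ^ 2 - μ * b₀ ^ 2)) * ((a₁ ^ 2 - μ * b₁ ^ 2) * h0
      + κ * (p₀ ^ 2 - c₀ ^ 2) * h2 - (a₁ * a₀ - μ * b₁ * b₀ + κ * p₁ * p₀) * h1')
      + κ ^ 2 * R * (p₀ ^ 2 - c₀ ^ 2) * h0

end CasselsPfister

/-! ### Valuations on `k(s)` and the two obstructions -/

section Residues

open Polynomial

variable {k : Type*} [Field k] {μ : k}

theorem norm_form_anisotropic (hμ : ¬ IsSquare μ) {a b : k} (h : a ^ 2 - μ * b ^ 2 = 0) :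
    a = 0 ∧ b = 0 := by
  have hb : b = 0 := by
    by_contra hb
    exact hμ ⟨a / b, by field_simp; linear_combination -h⟩
  subst hb
  exact ⟨by simpa using h, rfl⟩

/-- Infinite descent at the place `X = a`, where the norm form `⟨1, -μ⟩` is anisotropic over the
residue field `k`, so that norms have even order. -/
theorem eq_zero_of_norm_eq_linear_mul_sq (hμ : ¬ IsSquare μ) {a : k} {e : k[X]}
    (he : e.eval a ≠ 0) (N : ℕ) : ∀ A B G : k[X], G.natDegree ≤ N →
      A ^ 2 - C μ * B ^ 2 = (X - C a) * e * G ^ 2 → G = 0 := by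
  induction N using Nat.strong_induction_on with
  | _ N ih =>
  intro A B G hN h
  by_contra hG
  have h0 := congrArg (eval a) h
  simp only [eval_sub, eval_pow, eval_mul, eval_C, eval_X, sub_self, zero_mul] at h0
  obtain ⟨hA, hB⟩ := norm_form_anisotropic hμ h0
  obtain ⟨A', rfl⟩ := dvd_iff_isRoot.2 hA
  obtain ⟨B', rfl⟩ := dvd_iff_isRoot.2 hB
  have h1 : (X - C a) * (A' ^ 2 - C μ * B' ^ 2) = e * G ^ 2 :=
    mul_left_cancel₀ (X_sub_C_ne_zero a) (by linear_combination h)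
  have h2 := congrArg (eval a) h1
  simp only [eval_sub, eval_pow, eval_mul, eval_C, eval_X, sub_self, zero_mul] at h2
  have hGa : G.eval a = 0 := by simpa [he] using h2.symm
  obtain ⟨G', rfl⟩ := dvd_iff_isRoot.2 hGa
  have hG' : G' ≠ 0 := right_ne_zero_of_mul hG
  have h3 : A' ^ 2 - C μ * B' ^ 2 = (X - C a) * e * G' ^ 2 :=
    mul_left_cancel₀ (X_sub_C_ne_zero a) (by linear_combination h1)
  rw [natDegree_mul (X_sub_C_ne_zero a) hG', natDegree_X_sub_C] at hN
  exact hG' (ih G'.natDegree (by omega) A' B' G' le_rfl h3)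

variable {F : Type*} [Field F] [Algebra k[X] F] [IsFractionRing k[X] F]

theorem fraction_eq_zero_of_norm_eq_linear_mul_sq (hμ : ¬ IsSquare μ) {a : k} {e : k[X]}
    (he : e.eval a ≠ 0) {A B G : F}
    (h : A ^ 2 - algebraMap k[X] F (C μ) * B ^ 2 = algebraMap k[X] F ((X - C a) * e) * G ^ 2) :
    A = 0 ∧ B = 0 ∧ G = 0 := by
  have hinj : Function.Injective (algebraMap k[X] F) := IsFractionRing.injective _ _
  have hne : ∀ {d : k[X]}, d ∈ nonZeroDivisors k[X] → algebraMap k[X] F d ≠ 0 := fun hd =>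
    (map_ne_zero_iff _ hinj).2 (nonZeroDivisors.ne_zero hd)
  obtain ⟨A, d₁, hd₁, rfl⟩ := IsFractionRing.div_surjective (A := k[X]) A
  obtain ⟨B, d₂, hd₂, rfl⟩ := IsFractionRing.div_surjective (A := k[X]) B
  obtain ⟨G, d₃, hd₃, rfl⟩ := IsFractionRing.div_surjective (A := k[X]) G
  have h1 := hne hd₁
  have h2 := hne hd₂
  have h3 := hne hd₃
  have hpol : (A * d₂ * d₃) ^ 2 - C μ * (B * d₁ * d₃) ^ 2
      = (X - C a) * e * (G * d₁ * d₂) ^ 2 := by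
    apply hinj
    field_simp at h
    simp only [map_sub, map_mul, map_pow] at h ⊢
    linear_combination h
  have hG := eq_zero_of_norm_eq_linear_mul_sq hμ he _ _ _ _ le_rfl hpol
  have hG0 : G = 0 := by
    simpa [nonZeroDivisors.ne_zero hd₁, nonZeroDivisors.ne_zero hd₂] using hG
  have hlc : ∀ P Q : k[X], P ^ 2 - C μ * Q ^ 2 = 0 → P = 0 ∧ Q = 0 := by
    intro P Q hPQ
    have h4 : P.leadingCoeff ^ 2 = μ * Q.leadingCoeff ^ 2 := by
      rw [← leadingCoeff_pow, sub_eq_zero.1 hPQ, leadingCoeff_mul, leadingCoeff_C,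
        leadingCoeff_pow]
    simpa using norm_form_anisotropic hμ (sub_eq_zero.2 h4)
  obtain ⟨hA, hB⟩ := hlc _ _ (by rw [hpol, hG]; ring)
  have hA0 : A = 0 := by
    simpa [nonZeroDivisors.ne_zero hd₂, nonZeroDivisors.ne_zero hd₃] using hA
  have hB0 : B = 0 := by
    simpa [nonZeroDivisors.ne_zero hd₁, nonZeroDivisors.ne_zero hd₃] using hB
  simp [hA0, hB0, hG0]

/-- The ternary form `⟨1, -μ, -κ⟩` with `κ = κ₀ (w (s² + 1) + 2 v s)` is anisotropic over `k(s)`,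
since `κ` has a simple zero at `s = -α`. -/
theorem generic_form_anisotropic (hμ : ¬ IsSquare μ) {κ₀ v w α α' : k}
    (hκ₀ : κ₀ ≠ 0) (hw : w ≠ 0)
    (hα : w * (α + α') = 2 * v) (hα' : α * α' = 1) (hne : α ≠ α') (a b c : F)
    (h : a ^ 2 - algebraMap k[X] F (C μ) * b ^ 2
      - algebraMap k[X] F (C κ₀ * (C w * (X ^ 2 + 1) + 2 * C v * X)) * c ^ 2 = 0) :
    a = 0 ∧ b = 0 ∧ c = 0 := by
  have hfac : C κ₀ * (C w * (X ^ 2 + 1) + 2 * C v * X)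
      = (X - C (-α)) * (C κ₀ * (C w * (X + C α'))) := by
    have h1 : (C w : k[X]) * (C α + C α') = 2 * C v := by
      rw [← C_add, ← C_mul, hα, C_mul, map_ofNat]
    have h2 : (C α : k[X]) * C α' = 1 := by rw [← C_mul, hα', C_1]
    rw [C_neg]
    linear_combination (-C κ₀ * X) * h1 - C κ₀ * C w * h2
  refine fraction_eq_zero_of_norm_eq_linear_mul_sq hμ (a := -α)
    (e := C κ₀ * (C w * (X + C α'))) ?_ ?_
  · have : -α + α' ≠ 0 := fun h => hne (by linear_combination -h)
    simp [hκ₀, hw, this]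
  · rw [← hfac]; linear_combination h

/-- With `R₁ = w (s - α) (s - α')` and `R₂ = w (s + α) (s + α')`, the element
`κ₀ R₂ (p² - (c₀² + R₁ R₂ Z²) q²)` with `q ≠ 0` is never a norm from `k(s)[Z][√μ]`: otherwise `κ₀ R₁`
would be a norm from `k(s)(√μ)` up to squares, but it has a simple zero at `s = α`. -/
theorem quadric_surface_bundle_obstruction [CharZero k] {i : k} (hi : i ^ 2 = -1)
    (hμ : ¬ IsSquare μ) {κ₀ c₀ v w α α' : k}
    (hκ₀ : κ₀ ≠ 0) (hc₀ : c₀ ≠ 0) (hw : w ≠ 0)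
    (hα : w * (α + α') = 2 * v) (hα' : α * α' = 1) (hne : α ≠ α')
    {R₁ R₂ : k[X]} (hR₁ : R₁ = C w * (X ^ 2 + 1) - 2 * C v * X)
    (hR₂ : R₂ = C w * (X ^ 2 + 1) + 2 * C v * X)
    {a b p q : F[X]} (hq : q ≠ 0)
    (h : a ^ 2 - C (algebraMap k[X] F (C μ)) * b ^ 2 = C (algebraMap k[X] F (C κ₀ * R₂)) *
      (p ^ 2 - (C (algebraMap k[X] F (C c₀)) ^ 2
        + C (algebraMap k[X] F (R₁ * R₂)) * X ^ 2) * q ^ 2)) : False := by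
  have hinj : Function.Injective (algebraMap k[X] F) := IsFractionRing.injective _ _
  have : CharZero F := charZero_of_injective_algebraMap hinj
  have han := generic_form_anisotropic (F := F) hμ hκ₀ hw hα hα' hne
  rw [← hR₂] at han
  obtain ⟨g, e₁, e₂, hg, hge⟩ := neg_mul_sq_is_norm_of_represents han
    ((map_ne_zero_iff _ hinj).2 (C_ne_zero.2 hc₀)) hq h
  have hfac : C κ₀ * R₁ = (X - C α) * (C κ₀ * (C w * (X - C α'))) := by
    have h1 : (C w : k[X]) * (C α + C α') = 2 * C v := by
      rw [← C_add, ← C_mul, hα, C_mul, map_ofNat]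
    have h2 : (C α : k[X]) * C α' = 1 := by rw [← C_mul, hα', C_1]
    rw [hR₁]
    linear_combination (C κ₀ * X) * h1 - C κ₀ * C w * h2
  have hi' : algebraMap k[X] F (C i) ^ 2 = -1 := by
    rw [← map_pow, ← C_pow, hi]; simp
  obtain ⟨-, -, h0⟩ := fraction_eq_zero_of_norm_eq_linear_mul_sq (F := F) hμ (a := α)
    (e := C κ₀ * (C w * (X - C α'))) (A := e₁) (B := e₂)
    (G := algebraMap k[X] F (C i) * algebraMap k[X] F R₂ * g)
    (by simp [hκ₀, hw, sub_ne_zero.2 hne]) (by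
      rw [← hfac, ← hge]
      simp only [map_mul]
      linear_combination (-algebraMap k[X] F (C κ₀) * algebraMap k[X] F R₁ *
        algebraMap k[X] F R₂ ^ 2 * g ^ 2) * hi')
  have hR₂0 : R₂ ≠ 0 := by
    intro h0
    have := (han 0 0 1 (by rw [h0]; simp)).2.2
    simp at this
  have hi0 : i ≠ 0 := by rintro rfl; simp at hi
  have h4 : algebraMap k[X] F R₂ ≠ 0 := (map_ne_zero_iff _ hinj).2 hR₂0
  have h5 : algebraMap k[X] F (C i) ≠ 0 := (map_ne_zero_iff _ hinj).2 (C_ne_zero.2 hi0)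
  exact mul_ne_zero (mul_ne_zero h5 h4) hg h0

end Residues

/-! ### Reduction to even polynomials in `y` -/

section Evenness

open Polynomial

theorem exists_expand_two_of_comp_neg_X_eq {F : Type*} [Field F] [CharZero F] {p : F[X]}
    (h : p.comp (-X) = p) : ∃ q, p = expand F 2 q := by
  refine ⟨contract 2 p, ?_⟩
  ext n
  rw [coeff_expand two_pos]
  split_ifs with hn
  · rw [coeff_contract two_ne_zero, Nat.div_mul_cancel hn]
  · have h1 := congrArg (coeff · n) h
    simp only [show (-X : F[X]) = C (-1) * X by simp, comp_C_mul_X_coeff] at h1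
    rw [(Nat.not_even_iff_odd.1 (mt even_iff_two_dvd.1 hn)).neg_one_pow] at h1
    exact self_eq_neg.1 (by linear_combination -h1)

variable {k : Type*} [Field k] {μ : k} {F : Type*} [Field F] [Algebra k[X] F]
  [IsFractionRing k[X] F]

/-- With `s` the generator of `F = k(s)`, the variable `X` in the role of `y` and `s X` in the role
of `x`, the element `c l l' (P² - f Q²)` is never a nonzero norm from `F[X][√μ]`. -/
theorem conic_bundle_obstruction [CharZero k] {i : k} (hi : i ^ 2 = -1)
    (hμ : ¬ IsSquare μ) {u v w α α' c : k}
    (hu : u ≠ 0) (hv : v ≠ 0) (hw : w ≠ 0) (huvw : w ^ 2 = u ^ 2 + v ^ 2)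
    (hα : w * (α + α') = 2 * v) (hα' : α * α' = 1) (hne : α ≠ α')
    (P Q n₁ n₂ : F[X])
    (hN : n₁ ^ 2 - C (algebraMap k[X] F (C μ)) * n₂ ^ 2 ≠ 0)
    (h : C (algebraMap k[X] F (C c)) * (C (algebraMap k[X] F X) * X + X
        - C (algebraMap k[X] F (C (u * μ ^ 2))))
      * (C (algebraMap k[X] F X) * X - C (algebraMap k[X] F (C α)) * X)
      * (P ^ 2 - (C (algebraMap k[X] F (C w)) ^ 2 * (C (algebraMap k[X] F X) * X) ^ 4
        + 2 * (C (algebraMap k[X] F (C u)) ^ 2 - C (algebraMap k[X] F (C v)) ^ 2)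
          * (C (algebraMap k[X] F X) * X) ^ 2 * X ^ 2
        + C (algebraMap k[X] F (C w)) ^ 2 * X ^ 4
        + C (algebraMap k[X] F (C (u * v * w * μ ^ 4))) ^ 2) * Q ^ 2)
      = n₁ ^ 2 - C (algebraMap k[X] F (C μ)) * n₂ ^ 2) : False := by
  have hinj : Function.Injective (algebraMap k[X] F) := IsFractionRing.injective _ _
  have : CharZero F := charZero_of_injective_algebraMap hinj
  have hμ0 : μ ≠ 0 := fun h => hμ (h ▸ IsSquare.zero)
  have hwv : w + v ≠ 0 := by
    intro h0
    apply hu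
    have : u ^ 2 = 0 := by linear_combination (w - v) * h0 - huvw
    simpa using this
  set R₁ : k[X] := C w * (X ^ 2 + 1) - 2 * C v * X with hR₁
  set R₂ : k[X] := C w * (X ^ 2 + 1) + 2 * C v * X with hR₂
  set κ₀ : k := 2 * v * w * (w + v) with hκ₀
  have hκ₀0 : κ₀ ≠ 0 := by simp [hκ₀, hv, hw, hwv]
  set θ : k[X] →+* F[X] := (C : F →+* F[X]).comp (algebraMap k[X] F) with hθ
  have hθC : ∀ p : k[X], C (algebraMap k[X] F p) = θ p := fun _ => rfl
  have hR : R₁ * R₂ = C w ^ 2 * X ^ 4 + 2 * (C u ^ 2 - C v ^ 2) * X ^ 2 + C w ^ 2 := by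
    have : (C w : k[X]) ^ 2 = C u ^ 2 + C v ^ 2 := by rw [← C_pow, huvw]; simp
    rw [hR₁, hR₂]
    linear_combination (2 * X ^ 2) * this
  simp only [hθC] at h hN
  have hιC : ∀ p, (θ p).comp (-X) = θ p := fun p => C_comp
  set f : F[X] := θ (C (u * v * w * μ ^ 4)) ^ 2 + θ (R₁ * R₂) * X ^ 4 with hf
  have hfι : f.comp (-X) = f := by
    simp only [hf, add_comp, mul_comp, pow_comp, hιC, X_comp]; ring
  have h' : θ (C c) * (θ (X + 1) * X - θ (C (u * μ ^ 2))) * (θ (X - C α) * X)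
      * (P ^ 2 - f * Q ^ 2) = n₁ ^ 2 - θ (C μ) * n₂ ^ 2 := by
    rw [← h, hf, hR]
    simp only [map_add, map_sub, map_mul, map_pow, map_one, map_ofNat]
    ring
  have hι := congrArg (fun p => p.comp (-X)) h'
  simp only [mul_comp, sub_comp, pow_comp, hιC, hfι, X_comp] at hι
  have hNι : n₁.comp (-X) ^ 2 - θ (C μ) * n₂.comp (-X) ^ 2 ≠ 0 := by
    intro h0
    apply hN
    have := congrArg (fun p => p.comp (-X)) h0
    simpa [mul_comp, sub_comp, pow_comp, hιC, comp_assoc] using this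
  have hιι : ∀ p : F[X], (p.comp (-X)).comp (-X) = p := fun p => by simp [comp_assoc]
  set P' := P.comp (-X)
  set Q' := Q.comp (-X)
  set n₁' := n₁.comp (-X)
  set n₂' := n₂.comp (-X)
  obtain ⟨P₁, hP₁⟩ := exists_expand_two_of_comp_neg_X_eq (p := P * P' + f * Q * Q') (by
    simp only [add_comp, mul_comp, hfι, P', Q', hιι]; ring)
  obtain ⟨Q₁, hQ₁⟩ := exists_expand_two_of_comp_neg_X_eq (p := P * Q' + Q * P') (by
    simp only [add_comp, mul_comp, P', Q', hιι]; ring)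
  obtain ⟨m₁, hm₁⟩ := exists_expand_two_of_comp_neg_X_eq
    (p := n₁ * n₁' + θ (C μ) * n₂ * n₂') (by
    simp only [add_comp, mul_comp, hιC, n₁', n₂', hιι]; ring)
  obtain ⟨m₂, hm₂⟩ := exists_expand_two_of_comp_neg_X_eq (p := n₁ * n₂' + n₂ * n₁') (by
    simp only [add_comp, mul_comp, n₁', n₂', hιι]; ring)
  have hexp : ∀ p, expand F 2 (θ p) = θ p := fun p => expand_C _ _
  set g : F[X] := θ (C (u * v * w * μ ^ 4)) ^ 2 + θ (R₁ * R₂) * X ^ 2 with hg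
  have hgf : expand F 2 g = f := by
    simp only [hg, hf, map_add, map_mul, map_pow, hexp, expand_X]; ring
  -- the norm of the equation for the involution `X ↦ -X`, in terms of `Z = X²`
  have hZ : θ (C c) ^ 2 * θ (X - C α) ^ 2 * X * (θ (X + 1) ^ 2 * X - θ (C (u * μ ^ 2)) ^ 2)
      * (P₁ ^ 2 - g * Q₁ ^ 2) = m₁ ^ 2 - θ (C μ) * m₂ ^ 2 := by
    apply expand_injective two_pos
    simp only [map_mul (expand F 2), map_sub (expand F 2), map_pow (expand F 2), hexp, hgf,
      expand_X, ← hP₁, ← hQ₁, ← hm₁, ← hm₂]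
    have := congrArg₂ (· * ·) h' hι
    linear_combination this
  have hZ0 : m₁ ^ 2 - θ (C μ) * m₂ ^ 2 ≠ 0 := by
    intro h0
    have := congrArg (expand F 2) h0
    simp only [map_mul (expand F 2), map_sub (expand F 2), map_pow (expand F 2), hexp,
      ← hm₁, ← hm₂, map_zero] at this
    exact mul_ne_zero hN hNι (by linear_combination this)
  have han := generic_form_anisotropic (F := F) hμ hκ₀0 hw hα hα' hne
  rw [← hR₂] at han
  have hκ0 : θ (C κ₀ * R₂) ≠ 0 := by
    intro h0
    have h1 : algebraMap k[X] F (C κ₀ * R₂) = 0 := C_eq_zero.1 h0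
    simpa using han 0 0 1 (by rw [h1]; ring)
  -- `H` is linear in `Z`, chosen so that `H² - u² f` vanishes at `Z = 0` and at `(s + 1)² Z = u² μ⁴`
  set H : F[X] := θ (C u * C (u * v * w * μ ^ 4)) - θ (C (w + v) * R₂) * X with hH
  have hHg : H ^ 2 - θ (C u) ^ 2 * g
      = θ (C κ₀ * R₂) * X * (θ (X + 1) ^ 2 * X - θ (C (u * μ ^ 2)) ^ 2) := by
    have huw : (θ (C w)) ^ 2 = θ (C u) ^ 2 + θ (C v) ^ 2 := by
      rw [← map_pow, ← C_pow, huvw]; simp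
    simp only [hH, hg, hκ₀, hR₁, hR₂, map_add, map_sub, map_mul, map_pow, map_one, map_ofNat]
    linear_combination ((θ (C w) * (θ X ^ 2 + 1) - 2 * θ (C v) * θ X)
      * (θ (C w) * (θ X ^ 2 + 1) + 2 * θ (C v) * θ X) * X ^ 2) * huw
  have hmain : (θ (C κ₀ * R₂) * m₁) ^ 2 - θ (C μ) * (θ (C κ₀ * R₂) * m₂) ^ 2
      = θ (C κ₀ * R₂) * ((θ (C c * (X - C α)) * (H * P₁ + θ (C u) * g * Q₁)) ^ 2
        - g * (θ (C c * (X - C α)) * (θ (C u) * P₁ + H * Q₁)) ^ 2) := by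
    rw [map_mul θ (C c)]
    linear_combination (-(θ (C κ₀ * R₂)) ^ 2) * hZ - (θ (C κ₀ * R₂) * θ (C c) ^ 2
      * θ (X - C α) ^ 2 * (P₁ ^ 2 - g * Q₁ ^ 2)) * hHg
  refine quadric_surface_bundle_obstruction (F := F) hi hμ hκ₀0 (c₀ := u * v * w * μ ^ 4)
    (by simp [hu, hv, hw, hμ0]) hw hα hα' hne hR₁ hR₂ ?_ hmain
  intro h0
  rw [h0] at hmain
  obtain ⟨h1, h2, -⟩ := polynomial_form_anisotropic han
    (a := θ (C κ₀ * R₂) * m₁) (b := θ (C κ₀ * R₂) * m₂)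
    (c := θ (C c * (X - C α)) * (H * P₁ + θ (C u) * g * Q₁))
    (by simp only [hθC]; linear_combination hmain)
  apply hZ0
  rw [(mul_eq_zero.1 h1).resolve_left hκ0, (mul_eq_zero.1 h2).resolve_left hκ0]
  ring

end Evenness

/-! ### Polynomial coordinates on the function field -/

section FunctionField

open MvPolynomial

variable {k : Type*} [Field k] {K : Type*} [Field K] [Algebra k K] {x y t : K}

theorem aeval_mem_adjoin_pair (p : MvPolynomial (Fin 2) k) :
    aeval ![x, y] p ∈ IntermediateField.adjoin k ({x, y} : Set K) := by
  induction p using MvPolynomial.induction_on with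
  | C a => rw [aeval_C]; exact IntermediateField.algebraMap_mem _ a
  | add p q hp hq => rw [map_add]; exact add_mem hp hq
  | mul_X p n hp =>
    rw [map_mul, aeval_X]
    refine mul_mem hp (IntermediateField.subset_adjoin _ _ ?_)
    fin_cases n <;> simp

theorem eq_zero_of_add_mul_eq_zero (hind : AlgebraicIndependent k ![x, y])
    (ht : t ∉ IntermediateField.adjoin k ({x, y} : Set K)) {p q : MvPolynomial (Fin 2) k}
    (h : aeval ![x, y] p + aeval ![x, y] q * t = 0) : p = 0 ∧ q = 0 := by
  have hinj : Function.Injective (aeval ![x, y] : MvPolynomial (Fin 2) k →ₐ[k] K) := hind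
  have hq : q = 0 := by
    by_contra hq
    have hq' : aeval ![x, y] q ≠ 0 := (map_ne_zero_iff _ hinj).2 hq
    refine ht ?_
    rw [show t = -(aeval ![x, y] p) / aeval ![x, y] q by
      field_simp; linear_combination h]
    exact div_mem (neg_mem (aeval_mem_adjoin_pair p)) (aeval_mem_adjoin_pair q)
  subst hq
  exact ⟨(map_eq_zero_iff _ hinj).1 (by simpa using h), rfl⟩

/-- Every element of `k(x, y, t)` is `(p + q t) / d` with polynomials `p, q, d` in `x, y`. -/
theorem exists_polynomial_coords (hind : AlgebraicIndependent k ![x, y])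
    {f : MvPolynomial (Fin 2) k} (hrel : t ^ 2 = aeval ![x, y] f)
    (hgen : IntermediateField.adjoin k {x, y, t} = ⊤)
    (ht : t ∉ IntermediateField.adjoin k ({x, y} : Set K)) (z : K) :
    ∃ d p q : MvPolynomial (Fin 2) k, d ≠ 0 ∧
      aeval ![x, y] d * z = aeval ![x, y] p + aeval ![x, y] q * t := by
  have hz : z ∈ IntermediateField.adjoin k {x, y, t} := hgen ▸ IntermediateField.mem_top
  induction hz using IntermediateField.adjoin_induction with
  | mem z hz =>
    rcases hz with rfl | rfl | rfl
    · exact ⟨1, X 0, 0, one_ne_zero, by simp⟩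
    · exact ⟨1, X 1, 0, one_ne_zero, by simp⟩
    · exact ⟨1, 0, 1, one_ne_zero, by simp⟩
  | algebraMap a => exact ⟨1, C a, 0, one_ne_zero, by simp⟩
  | add z z' _ _ hz hz' =>
    obtain ⟨d, p, q, hd, h⟩ := hz
    obtain ⟨d', p', q', hd', h'⟩ := hz'
    refine ⟨d * d', p * d' + p' * d, q * d' + q' * d, mul_ne_zero hd hd', ?_⟩
    simp only [map_add, map_mul]
    linear_combination aeval ![x, y] d' * h + aeval ![x, y] d * h'
  | mul z z' _ _ hz hz' =>
    obtain ⟨d, p, q, hd, h⟩ := hz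
    obtain ⟨d', p', q', hd', h'⟩ := hz'
    refine ⟨d * d', p * p' + q * q' * f, p * q' + q * p', mul_ne_zero hd hd', ?_⟩
    simp only [map_add, map_mul, ← hrel]
    linear_combination aeval ![x, y] d' * z' * h
      + (aeval ![x, y] p + aeval ![x, y] q * t) * h'
  | inv z _ hz =>
    obtain ⟨d, p, q, hd, h⟩ := hz
    rcases eq_or_ne z 0 with rfl | hz0
    · exact ⟨1, 0, 0, one_ne_zero, by simp⟩
    have hN : p ^ 2 - f * q ^ 2 ≠ 0 := by
      intro h0
      have h1 : (aeval ![x, y] p + aeval ![x, y] q * t)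
          * (aeval ![x, y] p + aeval ![x, y] (-q) * t) = 0 := by
        have := congrArg (aeval ![x, y]) h0
        simp only [map_sub, map_mul, map_pow, map_neg, map_zero, ← hrel] at this ⊢
        linear_combination this
      have hpq : p = 0 ∧ q = 0 := by
        rcases mul_eq_zero.1 h1 with h2 | h2
        · exact eq_zero_of_add_mul_eq_zero hind ht h2
        · simpa using eq_zero_of_add_mul_eq_zero hind ht h2
      rw [hpq.1, hpq.2, map_zero, zero_mul, add_zero] at h
      exact mul_ne_zero ((map_ne_zero_iff _ hind).2 hd) hz0 h
    refine ⟨p ^ 2 - f * q ^ 2, d * p, -(d * q), hN, ?_⟩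
    simp only [map_sub, map_mul, map_pow, map_neg, ← hrel]
    apply mul_right_cancel₀ hz0
    rw [mul_assoc, inv_mul_cancel₀ hz0]
    linear_combination (-(aeval ![x, y] p) + aeval ![x, y] q * t) * h

/-- Comparing the coefficients of `1` and `t`, after clearing denominators, in the equation
`l = c l' (a² - μ b²)` with `a = (p₀ + p₁ t) / d` and `b = (q₀ + q₁ t) / d`. -/
theorem polynomial_norm_equation [CharZero k] (hind : AlgebraicIndependent k ![x, y])
    {f l l' : MvPolynomial (Fin 2) k} (hrel : t ^ 2 = aeval ![x, y] f)
    (hgen : IntermediateField.adjoin k {x, y, t} = ⊤)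
    (ht : t ∉ IntermediateField.adjoin k ({x, y} : Set K)) {μ c : k} (hc : c ≠ 0) (hl' : l' ≠ 0)
    {a b : K} (h : aeval ![x, y] l = algebraMap k K c * aeval ![x, y] l'
      * (a ^ 2 - algebraMap k K μ * b ^ 2)) :
    ∃ d p₀ p₁ q₀ q₁ : MvPolynomial (Fin 2) k, d ≠ 0 ∧ p₀ * p₁ = C μ * q₀ * q₁ ∧
      d ^ 2 * l = C c * l' * (p₀ ^ 2 - C μ * q₀ ^ 2 + (p₁ ^ 2 - C μ * q₁ ^ 2) * f) := by
  obtain ⟨d, p₀, p₁, hd, ha⟩ := exists_polynomial_coords hind hrel hgen ht a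
  obtain ⟨e, q₀, q₁, he, hb⟩ := exists_polynomial_coords hind hrel hgen ht b
  have key := eq_zero_of_add_mul_eq_zero hind ht
    (p := (d * e) ^ 2 * l - C c * l' * ((p₀ * e) ^ 2 - C μ * (q₀ * d) ^ 2
      + ((p₁ * e) ^ 2 - C μ * (q₁ * d) ^ 2) * f))
    (q := -(C (2 * c) * l' * ((p₀ * e) * (p₁ * e) - C μ * (q₀ * d) * (q₁ * d)))) (by
      simp only [map_sub, map_add, map_mul, map_pow, map_neg, ← hrel, aeval_C, map_ofNat]
      linear_combination (aeval ![x, y] d * aeval ![x, y] e) ^ 2 * h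
        + algebraMap k K c * aeval ![x, y] l' * (aeval ![x, y] e ^ 2
          * (aeval ![x, y] d * a + aeval ![x, y] p₀ + aeval ![x, y] p₁ * t) * ha
        - algebraMap k K μ * aeval ![x, y] d ^ 2
          * (aeval ![x, y] e * b + aeval ![x, y] q₀ + aeval ![x, y] q₁ * t) * hb))
  refine ⟨d * e, p₀ * e, p₁ * e, q₀ * d, q₁ * d, mul_ne_zero hd he, ?_, sub_eq_zero.1 key.1⟩
  have h2 : C (2 * c) * l' ≠ 0 := mul_ne_zero (by simpa using hc) hl'
  exact sub_eq_zero.1 ((mul_eq_zero.1 (neg_eq_zero.1 key.2)).resolve_left h2)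

end FunctionField

/-! ### The substitution `x = s y` -/

section Slopes

open Polynomial

variable {k : Type*} [Field k]

/-- The substitution `x = s y` as a homomorphism `k[x, y] → F[y]`, where `F` is a field over `k[s]`
(for instance `k(s)`); the variable `x` is `X 0` and `y` is `X 1`. -/
noncomputable def slopeHom (k : Type*) [Field k] (F : Type*) [Field F] [Algebra k[X] F] :
    MvPolynomial (Fin 2) k →+* F[X] :=
  MvPolynomial.eval₂Hom (((C : F →+* F[X]).comp (algebraMap k[X] F)).comp C)
    ![C (algebraMap k[X] F X) * X, X]

/-- A polynomial `p` in the kernel vanishes at all points `(s r, r)`, so `p(x, y) y` vanishes on `k²`. -/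
theorem slopeHom_injective [CharZero k] (F : Type*) [Field F] [Algebra k[X] F]
    [IsFractionRing k[X] F] : Function.Injective (slopeHom k F) := by
  have hinj : Function.Injective (algebraMap k[X] F) := IsFractionRing.injective _ _
  set ψ : MvPolynomial (Fin 2) k →+* k[X][X] :=
    MvPolynomial.eval₂Hom ((C : k[X] →+* k[X][X]).comp C) ![C X * X, X] with hψ
  have hfac : slopeHom k F = (mapRingHom (algebraMap k[X] F)).comp ψ := by
    apply MvPolynomial.ringHom_ext
    · intro a; simp [slopeHom, hψ]
    · intro j; fin_cases j <;> simp [slopeHom, hψ]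
  rw [hfac]
  refine (map_injective _ hinj).comp ((injective_iff_map_eq_zero ψ).2 fun p hp => ?_)
  have hev : ∀ s r : k, MvPolynomial.eval ![s * r, r] p = 0 := by
    intro s r
    have h1 : ((evalRingHom s).comp (evalRingHom (C r))).comp ψ
        = MvPolynomial.eval ![s * r, r] := by
      apply MvPolynomial.ringHom_ext
      · intro a; simp [hψ]
      · intro j; fin_cases j <;> simp [hψ, mul_comm r s]
    rw [← h1, RingHom.comp_apply, hp, map_zero]
  have h2 : p * MvPolynomial.X 1 = 0 := by
    apply MvPolynomial.funext
    intro z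
    rw [map_mul, MvPolynomial.eval_X, map_zero]
    rcases eq_or_ne (z 1) 0 with h | h
    · rw [h, mul_zero]
    · have h3 : z = ![z 0 / z 1 * z 1, z 1] := by
        ext j; fin_cases j <;> simp [h]
      rw [h3, hev, zero_mul]
  exact (mul_eq_zero.1 h2).resolve_right (MvPolynomial.X_ne_zero 1)

/-- The equations of `polynomial_norm_equation`, transported to `F[X]`, express `c l l' (P² - f Q²)`
as a nonzero norm for suitable `P` and `Q`, contradicting `conic_bundle_obstruction`. -/
theorem obstruction_of_norm_equation {μ : k} {F : Type*} [Field F] [Algebra k[X] F]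
    [IsFractionRing k[X] F] [CharZero k] {i : k} (hi : i ^ 2 = -1)
    (hμ : ¬ IsSquare μ) {u v w α α' c : k}
    (hu : u ≠ 0) (hv : v ≠ 0) (hw : w ≠ 0) (huvw : w ^ 2 = u ^ 2 + v ^ 2)
    (hα : w * (α + α') = 2 * v) (hα' : α * α' = 1) (hne : α ≠ α')
    {l l' f d p₀ p₁ q₀ q₁ : F[X]}
    (hl : l = C (algebraMap k[X] F X) * X + X - C (algebraMap k[X] F (C (u * μ ^ 2))))
    (hl' : l' = C (algebraMap k[X] F X) * X - C (algebraMap k[X] F (C α)) * X)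
    (hf : f = C (algebraMap k[X] F (C w)) ^ 2 * (C (algebraMap k[X] F X) * X) ^ 4
        + 2 * (C (algebraMap k[X] F (C u)) ^ 2 - C (algebraMap k[X] F (C v)) ^ 2)
          * (C (algebraMap k[X] F X) * X) ^ 2 * X ^ 2
        + C (algebraMap k[X] F (C w)) ^ 2 * X ^ 4
        + C (algebraMap k[X] F (C (u * v * w * μ ^ 4))) ^ 2)
    (hdl : d ^ 2 * l ≠ 0)
    (hpq : p₀ * p₁ = C (algebraMap k[X] F (C μ)) * q₀ * q₁)
    (h : d ^ 2 * l = C (algebraMap k[X] F (C c)) * l' *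
      (p₀ ^ 2 - C (algebraMap k[X] F (C μ)) * q₀ ^ 2
        + (p₁ ^ 2 - C (algebraMap k[X] F (C μ)) * q₁ ^ 2)
          * (C (algebraMap k[X] F (C μ)) * f))) : False := by
  have key : ∀ P Q n₁ n₂ : F[X], C (algebraMap k[X] F (C c)) * l * l' * (P ^ 2 - f * Q ^ 2)
      = n₁ ^ 2 - C (algebraMap k[X] F (C μ)) * n₂ ^ 2 →
      n₁ ^ 2 - C (algebraMap k[X] F (C μ)) * n₂ ^ 2 ≠ 0 → False := by
    intro P Q n₁ n₂ h1 h2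
    rw [hl, hl', hf] at h1
    exact conic_bundle_obstruction hi hμ hu hv hw huvw hα hα' hne P Q n₁ n₂ h2 h1
  have hd0 : d ≠ 0 := fun h0 => hdl (by rw [h0]; ring)
  have hl0 : l ≠ 0 := right_ne_zero_of_mul hdl
  set m := C (algebraMap k[X] F (C μ)) with hm
  set γ := C (algebraMap k[X] F (C c)) with hγ
  by_cases hN : p₀ ^ 2 - m * q₀ ^ 2 = 0
  · obtain ⟨rfl, rfl, -⟩ := polynomial_form_anisotropic
      (generic_form_anisotropic (F := F) hμ one_ne_zero hw hα hα' hne) (c := 0)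
      (a := p₀) (b := q₀) (by rw [← hm]; linear_combination hN)
    have h1 : γ * l * l' * (0 ^ 2 - f * d ^ 2)
      = (γ * l' * f * m * q₁) ^ 2 - m * (γ * l' * f * p₁) ^ 2 := by
      linear_combination (-γ * l' * f) * h
    refine key _ _ _ _ h1 ?_
    rw [← h1]
    rw [h] at hdl
    have h2 : γ * l' ≠ 0 := left_ne_zero_of_mul hdl
    have h3 : f ≠ 0 := by
      rintro h0
      exact hdl (by rw [h0]; ring)
    have h4 : γ * l * l' * (0 ^ 2 - f * d ^ 2) = -((γ * l') * l * f * d ^ 2) := by ring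
    rw [h4]
    exact neg_ne_zero.2 (mul_ne_zero (mul_ne_zero (mul_ne_zero h2 hl0) h3) (pow_ne_zero 2 hd0))
  · have h1 : γ * l * l' * ((p₀ ^ 2 - m * q₀ ^ 2) ^ 2 - f * (m * (p₀ * q₁ - q₀ * p₁)) ^ 2)
      = (l * d * p₀) ^ 2 - m * (l * d * q₀) ^ 2 := by
      linear_combination (-l * (p₀ ^ 2 - m * q₀ ^ 2)) * h
        - γ * l * l' * m * f * (p₀ * p₁ - m * q₀ * q₁) * hpq
    refine key _ _ _ _ h1 ?_
    have h2 : (l * d * p₀) ^ 2 - m * (l * d * q₀) ^ 2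
        = (l * d) ^ 2 * (p₀ ^ 2 - m * q₀ ^ 2) := by ring
    rw [h2]
    exact mul_ne_zero (pow_ne_zero 2 (mul_ne_zero hl0 hd0)) hN

end Slopes

/-- With `A = w²μ`, `B = (u²−v²)μ` and `C = u²v²w²μ⁹`, the function field of the del Pezzo
surface `A x⁴ + 2B x²y² + A y⁴ + C z⁴ = t²` of degree 2 is not `k`-rational. -/
theorem delPezzo2_quartic_not_rational
    (k : Type*) [Field k] [CharZero k]
    (i : k) (hi : i ^ 2 = -1)
    (μ : k) (hμ : ¬ IsSquare μ)
    (u v w : k) (hu : u ≠ 0) (hv : v ≠ 0) (hw : w ≠ 0)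
    (huvw : w ^ 2 = u ^ 2 + v ^ 2)
    (A B C : k)
    (hA : A = w ^ 2 * μ) (hB : B = (u ^ 2 - v ^ 2) * μ)
    (hC : C = u ^ 2 * v ^ 2 * w ^ 2 * μ ^ 9)
    -- K is the function field of the surface: K = k(x, y, t) with t² = f_C(x, y)
    (K : Type*) [Field K] [Algebra k K]
    (x y t : K)
    (hind : AlgebraicIndependent k ![x, y])
    (hrel : t ^ 2 = algebraMap k K A * x ^ 4 + 2 * algebraMap k K B * x ^ 2 * y ^ 2
        + algebraMap k K A * y ^ 4 + algebraMap k K C)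
    (hgen : IntermediateField.adjoin k {x, y, t} = ⊤)
    (ht : t ∉ IntermediateField.adjoin k ({x, y} : Set K)) :
    ¬ IsKRational k K := by
  rintro ⟨φ⟩
  have hi0 : i ≠ 0 := by rintro rfl; simp at hi
  -- `x = α y` and `x = α' y` are two of the lines through `x = y = 0` on which `f` is constant
  obtain ⟨α, hαdef⟩ : ∃ α, α = (v + i * u) / w := ⟨_, rfl⟩
  obtain ⟨α', hαdef'⟩ : ∃ α', α' = (v - i * u) / w := ⟨_, rfl⟩
  have hα : w * (α + α') = 2 * v := by rw [hαdef, hαdef']; field_simp; ring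
  have hα' : α * α' = 1 := by
    rw [hαdef, hαdef']; field_simp; linear_combination -huvw - u ^ 2 * hi
  have hne : α ≠ α' := by
    intro h
    have h1 : 2 * (i * u) = 0 := by
      rw [hαdef, hαdef'] at h
      field_simp at h
      linear_combination h
    simp [hi0, hu] at h1
  have hinj : Function.Injective (MvPolynomial.aeval ![x, y] : MvPolynomial (Fin 2) k →ₐ[k] K) :=
    hind
  set j := slopeHom k (FractionRing (Polynomial k)) with hj
  have hjinj : Function.Injective j := slopeHom_injective _
  obtain ⟨l, hl⟩ : ∃ l : MvPolynomial (Fin 2) k,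
      l = MvPolynomial.X 0 + MvPolynomial.X 1 - MvPolynomial.C (u * μ ^ 2) := ⟨_, rfl⟩
  obtain ⟨l', hl'⟩ : ∃ l' : MvPolynomial (Fin 2) k,
      l' = MvPolynomial.X 0 - MvPolynomial.C α * MvPolynomial.X 1 := ⟨_, rfl⟩
  obtain ⟨f, hf⟩ : ∃ f : MvPolynomial (Fin 2) k,
      f = MvPolynomial.C w ^ 2 * MvPolynomial.X 0 ^ 4
      + 2 * (MvPolynomial.C u ^ 2 - MvPolynomial.C v ^ 2)
        * MvPolynomial.X 0 ^ 2 * MvPolynomial.X 1 ^ 2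
      + MvPolynomial.C w ^ 2 * MvPolynomial.X 1 ^ 4
      + MvPolynomial.C (u * v * w * μ ^ 4) ^ 2 := ⟨_, rfl⟩
  have hl0 : l ≠ 0 := by
    intro h
    have := congrArg (MvPolynomial.eval ![u * μ ^ 2, 1]) h
    simp [hl] at this
  have hl'0 : l' ≠ 0 := by
    intro h
    have := congrArg (MvPolynomial.eval ![1, 0]) h
    simp [hl'] at this
  have hrel' : t ^ 2 = MvPolynomial.aeval ![x, y] (MvPolynomial.C μ * f) := by
    rw [hrel, hf, hA, hB, hC]
    simp
    ring
  have hlK : MvPolynomial.aeval ![x, y] l = x + y - algebraMap k K (u * μ ^ 2) := by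
    simp [hl]
  have hl'K : MvPolynomial.aeval ![x, y] l' = x - algebraMap k K α * y := by
    simp [hl']
  obtain ⟨c, a, b, hc, hab⟩ := bitangent_ratio_eq_const_mul_norm (σ := Fin 2)
    (L := FractionRing (MvPolynomial (Fin 2) k)) hμ hu hv hw huvw hα hα' hne (φ x) (φ y) (φ t)
    (by
      have := congrArg φ hrel
      rw [hA, hB, hC] at this
      simp only [map_add, map_sub, map_mul, map_pow, map_ofNat, AlgEquiv.commutes] at this ⊢
      linear_combination this)
    (by
      rw [← φ.commutes, ← map_add, ← map_sub, ← hlK]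
      exact (map_ne_zero_iff _ φ.injective).2 ((map_ne_zero_iff _ hinj).2 hl0))
    (by
      rw [← φ.commutes, ← map_mul, ← map_sub, ← hl'K]
      exact (map_ne_zero_iff _ φ.injective).2 ((map_ne_zero_iff _ hinj).2 hl'0))
  have habK : MvPolynomial.aeval ![x, y] l = algebraMap k K c * MvPolynomial.aeval ![x, y] l'
      * (φ.symm a ^ 2 - algebraMap k K μ * φ.symm b ^ 2) := by
    have := congrArg φ.symm hab
    rw [hlK, hl'K]
    simpa only [map_add, map_sub, map_mul, map_pow, AlgEquiv.commutes,
      AlgEquiv.symm_apply_apply] using this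
  obtain ⟨d, p₀, p₁, q₀, q₁, hd, h1, h2⟩ :=
    polynomial_norm_equation hind hrel' hgen ht hc hl'0 habK
  have h1' := congrArg j h1
  have h2' := congrArg j h2
  simp only [map_add, map_sub, map_mul, map_pow] at h1' h2'
  have hjC : ∀ a : k, j (MvPolynomial.C a) = Polynomial.C (algebraMap (Polynomial k)
      (FractionRing (Polynomial k)) (Polynomial.C a)) := fun a => by simp [hj, slopeHom]
  have hj0 : j (MvPolynomial.X 0) = Polynomial.C (algebraMap (Polynomial k)
      (FractionRing (Polynomial k)) Polynomial.X) * Polynomial.X := by simp [hj, slopeHom]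
  have hj1 : j (MvPolynomial.X 1) = Polynomial.X := by simp [hj, slopeHom]
  rw [hjC] at h1'
  rw [hjC, hjC] at h2'
  refine obstruction_of_norm_equation (F := FractionRing (Polynomial k)) hi hμ hu hv hw huvw
    hα hα' hne (l := j l) (l' := j l') (f := j f) ?_ ?_ ?_ ?_ h1' h2'
  · rw [hl, map_sub, map_add, hjC, hj0, hj1]
  · rw [hl', map_sub, map_mul, hjC, hj0, hj1]
  · rw [hf]
    simp only [map_add j, map_sub j, map_mul j, map_pow j, map_ofNat j, hjC, hj0, hj1]
  · exact mul_ne_zero (pow_ne_zero 2 ((map_ne_zero_iff _ hjinj).2 hd))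
      ((map_ne_zero_iff _ hjinj).2 hl0)
end

section
/- With C = u²v²w²μ⁹, let ν be the k-automorphism of K_C of order 2 determined by ν(X) = −X, ν(Y) = −Y, ν(T) = T (the involution of type 1 in the paper's Table 2). Then the fixed field of ⟨ν⟩ acting on K_C is not k-rational. -/
section Helpers

open Polynomial

/-! ### Norms in unique factorization domains -/

section UFD

variable {S : Type*} [CommRing S] [IsDomain S] [UniqueFactorizationMonoid S]

lemma finiteMult {π x : S} (hπ : Prime π) (hx : x ≠ 0) : FiniteMultiplicity π x :=
  FiniteMultiplicity.of_not_isUnit hπ.not_isUnit hx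

lemma mult_mul {π x y : S} (hπ : Prime π) (hx : x ≠ 0) (hy : y ≠ 0) :
    multiplicity π (x * y) = multiplicity π x + multiplicity π y :=
  multiplicity_mul hπ (finiteMult hπ (mul_ne_zero hx hy))

/-- A prime that is self-conjugate up to a unit occurs equally often in `x` and in its conjugate. -/
lemma mult_conj {S : Type*} [CommRing S] (τ : S ≃+* S) {π x : S} (hπa : Associated (τ π) π) :
    multiplicity π (τ x) = multiplicity π x := by
  have h1 : multiplicity (τ π) (τ x) = multiplicity π x := by
    have := emultiplicity_map_eq τ (a := π) (b := x)
    simp only [multiplicity, this]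
  rw [← h1]
  exact multiplicity_eq_of_associated_left hπa

/-- In a UFD with an involution `τ`, a `τ`-invariant element in which every self-conjugate prime
occurs to even order is a norm `z * τ z` up to a unit: the other primes occur in conjugate pairs,
so conjugate pairs and squares can be split off one at a time. -/
lemma exists_norm (τ : S ≃+* S) (hτ : ∀ x, τ (τ x) = x) :
    ∀ F : S, F ≠ 0 → τ F = F →
      (∀ π, Prime π → Associated (τ π) π → Even (multiplicity π F)) →
      ∃ z c : S, IsUnit c ∧ F = c * (z * τ z) := by
  intro F
  induction F using (wellFounded_dvdNotUnit (α := S)).induction with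
  | _ F ih =>
  intro hF0 hF hev
  by_cases hu : IsUnit F
  · exact ⟨1, F, hu, by simp⟩
  obtain ⟨π, hirr, hdvd⟩ := WfDvdMonoid.exists_irreducible_factor hu hF0
  have hπ : Prime π := hirr.prime
  have hτπ : Prime (τ π) := (MulEquiv.prime_iff (τ : S ≃* S)).2 hπ
  have key : π * τ π ∣ F := by
    by_cases ha : Associated (τ π) π
    · have h1 : 2 ≤ multiplicity π F := by
        have h0 : multiplicity π F ≠ 0 := by
          intro h0
          exact (multiplicity_eq_zero.1 h0) hdvd
        obtain ⟨r, hr⟩ := hev π hπ ha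
        omega
      have h2 : π ^ 2 ∣ F := pow_dvd_of_le_multiplicity h1
      have h3 : Associated (π * τ π) (π ^ 2) := by
        rw [pow_two]; exact ha.mul_left π
      exact h3.dvd.trans h2
    · have h1 : τ π ∣ F := by rw [← hF]; exact map_dvd τ hdvd
      obtain ⟨G, rfl⟩ := hdvd
      rcases hτπ.dvd_or_dvd h1 with h | h
      · exact absurd (hτπ.associated_of_dvd hπ h) ha
      · exact mul_dvd_mul_left _ h
  obtain ⟨G, rfl⟩ := key
  have hn0 : π * τ π ≠ 0 := mul_ne_zero hπ.ne_zero hτπ.ne_zero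
  have hG0 : G ≠ 0 := right_ne_zero_of_mul hF0
  have hG : τ G = G := by
    apply mul_left_cancel₀ hn0
    rw [← hF]
    simp only [map_mul, hτ]; ring
  obtain ⟨z, c, hc, hz⟩ := ih G
    ⟨hG0, π * τ π, fun h => hπ.not_isUnit (isUnit_of_mul_isUnit_left h), by ring⟩ hG0 hG (by
      intro ρ hρ hρa
      have := hev ρ hρ hρa
      rw [mult_mul hρ hn0 hG0, mult_mul hρ hπ.ne_zero hτπ.ne_zero, mult_conj τ hρa] at this
      rcases this with ⟨r, hr⟩
      exact ⟨r - multiplicity ρ π, by omega⟩)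
  exact ⟨π * z, c, hc, by rw [map_mul]; nth_rewrite 1 [hz]; ring⟩

/-- A prime dividing two of the forms `A - e * B`, `e ∈ {a, b, c, d}`, divides both `A` and `B`,
provided the `e` involved differ by units. After removing common factors of `A` and `B`, each of
which contributes four to the order of the product of the four forms and two to that of the first
two, the order of the product of the first two is therefore zero or the full order. -/
lemma even_mult {π : S} (hπ : Prime π) {a b c d : S}
    (hab : IsUnit (a - b)) (hac : IsUnit (a - c)) (had : IsUnit (a - d))
    (hbc : IsUnit (b - c)) (hbd : IsUnit (b - d)) :
    ∀ (n : ℕ) (A B : S), (A - a * B) ≠ 0 → (A - b * B) ≠ 0 → (A - c * B) ≠ 0 → (A - d * B) ≠ 0 →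
    multiplicity π ((A - a * B) * (A - b * B) * ((A - c * B) * (A - d * B))) = n →
    Even n → Even (multiplicity π ((A - a * B) * (A - b * B))) := by
  have aux : ∀ {A B e f : S}, IsUnit (e - f) → ¬ (π ∣ A ∧ π ∣ B) → π ∣ A - e * B →
      multiplicity π (A - f * B) = 0 := by
    intro A B e f hef hAB he
    apply multiplicity_eq_zero.2
    intro hf
    apply hAB
    have h1 : π ∣ (e - f) * B := by
      have := dvd_sub hf he
      convert this using 1; ring
    have h2 : π ∣ B := hef.dvd_mul_left.1 h1
    refine ⟨?_, h2⟩
    have := dvd_add he (h2.mul_left e)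
    simpa using this
  intro n
  induction n using Nat.strong_induction_on with
  | _ n ih =>
  intro A B ha hb hc hd hn hev
  by_cases hAB : π ∣ A ∧ π ∣ B
  · obtain ⟨⟨A, rfl⟩, ⟨B, rfl⟩⟩ := hAB
    have hh : ∀ e : S, π * A - e * (π * B) = π * (A - e * B) := fun e => by ring
    simp only [hh] at *
    have hπ0 := hπ.ne_zero
    have ha' := right_ne_zero_of_mul ha
    have hb' := right_ne_zero_of_mul hb
    have hc' := right_ne_zero_of_mul hc
    have hd' := right_ne_zero_of_mul hd
    have hππ : multiplicity π π = 1 := multiplicity_self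
    rw [mult_mul hπ (mul_ne_zero ha hb) (mul_ne_zero hc hd), mult_mul hπ ha hb,
      mult_mul hπ hc hd, mult_mul hπ hπ0 ha', mult_mul hπ hπ0 hb', mult_mul hπ hπ0 hc',
      mult_mul hπ hπ0 hd', hππ] at hn
    have := ih (n - 4) (by omega) A B ha' hb' hc' hd' (by
      rw [mult_mul hπ (mul_ne_zero ha' hb') (mul_ne_zero hc' hd'), mult_mul hπ ha' hb',
      mult_mul hπ hc' hd']; omega) (by
        obtain ⟨r, hr⟩ := hev
        exact ⟨r - 2, by omega⟩)
    rw [mult_mul hπ ha' hb'] at this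
    rw [mult_mul hπ ha hb, mult_mul hπ hπ0 ha', mult_mul hπ hπ0 hb', hππ]
    obtain ⟨r, hr⟩ := this
    exact ⟨r + 1, by omega⟩
  · rw [mult_mul hπ (mul_ne_zero ha hb) (mul_ne_zero hc hd), mult_mul hπ ha hb,
      mult_mul hπ hc hd] at hn
    rw [mult_mul hπ ha hb]
    by_cases h1 : π ∣ A - a * B
    · rw [aux hab hAB h1, aux hac hAB h1, aux had hAB h1] at hn
      rw [aux hab hAB h1]
      rw [← hn] at hev
      simpa using hev
    by_cases h2 : π ∣ A - b * B
    · rw [aux hbc hAB h2, aux hbd hAB h2] at hn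
      rw [← hn] at hev
      simpa using hev
    rw [multiplicity_eq_zero.2 h1, multiplicity_eq_zero.2 h2]
    simp

end UFD

/-! ### Descending norms from `E(Q)` to `E` -/

section Star

variable {E : Type*} [Field E]

/-- The reciprocal-conjugate polynomial `X ^ D * p̄(h / X)`, where `p̄` is `p` with `τ` applied to
its coefficients. It is a polynomial in this sense when `p.natDegree ≤ D`; if `Q * T Q = h` for
some extension `T` of `τ`, its value at `Q` is `Q ^ D * T (p(Q))`. -/
noncomputable def starPoly (τ : E ≃+* E) (h : E) (D : ℕ) (p : E[X]) : E[X] :=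
  reflect D ((p.map (τ : E →+* E)).comp (C h * X))

lemma coeff_starPoly (τ : E ≃+* E) (h : E) (D : ℕ) (p : E[X]) (n : ℕ) :
    (starPoly τ h D p).coeff n = τ (p.coeff (revAt D n)) * h ^ (revAt D n) := by
  simp [starPoly, coeff_reflect, comp_C_mul_X_coeff]

/-- Applying `starPoly` twice multiplies by `h ^ D`. -/
lemma starPoly_starPoly (τ : E ≃+* E) (hτ : ∀ x, τ (τ x) = x) {h : E} (hh : τ h = h) {D : ℕ}
    {p : E[X]} (hp : p.natDegree ≤ D) :
    starPoly τ h D (starPoly τ h D p) = C (h ^ D) * p := by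
  ext n
  rw [coeff_starPoly, coeff_starPoly, coeff_C_mul, revAt_invol, map_mul, map_pow, hτ, hh]
  by_cases hn : n ≤ D
  · rw [revAt_le hn, mul_assoc, ← pow_add, Nat.add_sub_cancel' hn, mul_comm]
  · rw [coeff_eq_zero_of_natDegree_lt (by omega)]; simp

lemma starPoly_C_mul (τ : E ≃+* E) (h : E) (D : ℕ) (c : E) (p : E[X]) :
    starPoly τ h D (C c * p) = C (τ c) * starPoly τ h D p := by
  ext n
  simp [coeff_starPoly, mul_assoc]

lemma natDegree_starPoly_le (τ : E ≃+* E) (h : E) {D : ℕ}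
    {p : E[X]} (hp : p.natDegree ≤ D) : (starPoly τ h D p).natDegree ≤ D := by
  rw [natDegree_le_iff_coeff_eq_zero]
  intro n hn
  rw [coeff_starPoly, revAt_eq_self_of_lt hn, coeff_eq_zero_of_natDegree_lt (by omega)]; simp

variable {Ω : Type*} [Field Ω] [Algebra E Ω]

lemma aeval_starPoly (τ : E ≃+* E) (T : Ω ≃+* Ω) (hT : ∀ e, T (algebraMap E Ω e) = algebraMap E Ω (τ e))
    {h : E} {Q : Ω} (hQ0 : Q ≠ 0) (hQ : Q * T Q = algebraMap E Ω h) {D : ℕ} {p : E[X]}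
    (hp : p.natDegree ≤ D) :
    aeval Q (starPoly τ h D p) = Q ^ D * T (aeval Q p) := by
  have hq : T Q = algebraMap E Ω h * Q⁻¹ := by rw [← hQ]; field_simp
  let _ : Invertible Q⁻¹ := invertibleOfNonzero (inv_ne_zero hQ0)
  have h1 := eval₂_reflect_mul_pow (algebraMap E Ω) Q⁻¹ D ((p.map (τ : E →+* E)).comp (C h * X)) (by
    refine natDegree_comp_le.trans ?_
    have := natDegree_C_mul_le h (X : E[X])
    rw [natDegree_X] at this
    have h2 := natDegree_map_le (f := (τ : E →+* E)) (p := p)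
    nlinarith)
  have h2 : T (aeval Q p) = eval₂ (algebraMap E Ω) Q⁻¹ ((p.map (τ : E →+* E)).comp (C h * X)) := by
    rw [eval₂_comp, eval₂_map]
    have : T (aeval Q p) = (T : Ω →+* Ω) (eval₂ (algebraMap E Ω) Q p) := rfl
    rw [this, hom_eval₂]
    congr 1
    · ext e; simp [hT]
    · simp [hq]
  rw [h2, ← h1]
  rw [invOf_eq_inv, inv_inv, aeval_def, starPoly, inv_pow]
  field_simp

/-- Let `T` be an involution of the rational function field `E(Q)` extending `τ` on `E`, with
`Q * T Q = h ∈ E`. If `f ∈ E` is a norm from `E(Q)`, then a power of `h` equals `f` times a norm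
from `E`. Indeed, writing the element of norm `f` as a reduced fraction `p(Q) / q(Q)`, one gets
`p * p^* = f * (q * q^*)` for the polynomials `p^*`, `q^*` of `starPoly`; coprimality and a degree
count give `q^* = l * p` with `l` a constant, and applying `starPoly` again gives the claim. -/
theorem descent (τ : E ≃+* E) (hτ : ∀ x, τ (τ x) = x) (T : Ω ≃+* Ω)
    (hT : ∀ e, T (algebraMap E Ω e) = algebraMap E Ω (τ e))
    {h : E} (hh : τ h = h) (hh0 : h ≠ 0) {Q : Ω} (hQ : Q * T Q = algebraMap E Ω h)
    (htr : Transcendental E Q) (htop : IntermediateField.adjoin E {Q} = ⊤)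
    {f : E} (hf0 : f ≠ 0) {z : Ω} (hz : algebraMap E Ω f = z * T z) :
    ∃ (D : ℕ) (l : E), l ≠ 0 ∧ h ^ D = f * (l * τ l) := by
  have hQ0 : Q ≠ 0 := by rintro rfl; apply hh0; simpa using hQ.symm
  have hz0 : z ≠ 0 := by rintro rfl; simp at hz; exact hf0 hz
  have hinj : Function.Injective (aeval Q : E[X] →ₐ[E] Ω) := transcendental_iff_injective.1 htr
  obtain ⟨r, s, hrs⟩ := (IntermediateField.mem_adjoin_simple_iff E z).1 (htop ▸ IntermediateField.mem_top)
  have hs0 : s ≠ 0 := by rintro rfl; simp at hrs; exact hz0 hrs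
  obtain ⟨p, q, hpq, hq0, hpqz⟩ : ∃ p q : E[X], IsCoprime p q ∧ q ≠ 0 ∧ z = aeval Q p / aeval Q q := by
    obtain ⟨q, p, g, hc, h1, h2⟩ := UniqueFactorizationMonoid.exists_reduced_factors s hs0 r
    have hg0 : g ≠ 0 := by rintro rfl; simp at h1; exact hs0 h1.symm
    have hq0 : q ≠ 0 := by rintro rfl; simp at h1; exact hs0 h1.symm
    refine ⟨p, q, hc.isCoprime.symm, hq0, ?_⟩
    have hg : aeval Q g ≠ 0 := fun h => hg0 (hinj (by simpa using h))
    rw [hrs, ← h1, ← h2, map_mul, map_mul, mul_div_mul_left _ _ hg]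
  have hq0' : aeval Q q ≠ 0 := fun h => hq0 (hinj (by simpa using h))
  have hp0' : aeval Q p ≠ 0 := by intro h; rw [h] at hpqz; simp at hpqz; exact hz0 hpqz
  have hp0 : p ≠ 0 := by rintro rfl; simp at hp0'
  set D := max p.natDegree q.natDegree with hD
  have hpD : p.natDegree ≤ D := le_max_left _ _
  have hqD : q.natDegree ≤ D := le_max_right _ _
  have key : p * starPoly τ h D p = C f * (q * starPoly τ h D q) := by
    apply hinj
    simp only [map_mul, aeval_C]
    rw [aeval_starPoly τ T hT hQ0 hQ hpD, aeval_starPoly τ T hT hQ0 hQ hqD, hz, hpqz, map_div₀]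
    have : T (aeval Q q) ≠ 0 := by simpa using hq0'
    field_simp
  obtain ⟨l, hl⟩ : p ∣ starPoly τ h D q := by
    have h1 : p ∣ q * (C f * starPoly τ h D q) := ⟨starPoly τ h D p, by rw [key]; ring⟩
    have h2 := hpq.dvd_of_dvd_mul_left h1
    exact (isUnit_C.2 (isUnit_iff_ne_zero.2 hf0)).dvd_mul_left.1 h2
  have hl' : starPoly τ h D p = C f * l * q := by
    apply mul_left_cancel₀ hp0
    rw [key, hl]; ring
  have hss := starPoly_starPoly τ hτ hh hqD
  have hl0 : l ≠ 0 := by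
    rintro rfl
    have hss' := starPoly_starPoly τ hτ hh hpD
    rw [hl'] at hss'
    have : starPoly τ h D (C f * 0 * q) = 0 := by ext n; simp [coeff_starPoly]
    rw [this] at hss'
    simp [hh0, hp0] at hss'
  have hdeg : l.natDegree = 0 := by
    have h1 := natDegree_starPoly_le τ h hqD
    have h2 := natDegree_starPoly_le τ h hpD
    rw [hl, natDegree_mul hp0 hl0] at h1
    rw [hl', natDegree_mul (mul_ne_zero (by simpa using hf0) hl0) hq0, natDegree_C_mul hf0] at h2
    omega
  obtain ⟨c, rfl⟩ : ∃ c, l = C c := ⟨_, eq_C_of_natDegree_eq_zero hdeg⟩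
  refine ⟨D, c, by simpa using hl0, ?_⟩
  rw [hl, mul_comm, starPoly_C_mul, hl'] at hss
  have : C (τ c * (f * c)) * q = C (h ^ D) * q := by
    rw [← hss]; simp only [map_mul]; ring
  have := C_injective (mul_right_cancel₀ hq0 this)
  rw [← this]; ring

end Star

/-! ### Parity of vanishing orders -/

section Parity

variable {L : Type*} [Field L]

/-- Over `L(X)`, the polynomial `((X² - a²)(X² - b²)) ^ D` is not a constant times `X² - a²` times
a norm: the order of vanishing at `a` forces `D` to be odd, the one at `b` forces `D` to be even.
The equation is stated with denominators cleared. -/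
lemma parity (τ : L ≃+* L) {a b c : L} (ha : τ a = a) (hb : τ b = b)
    (h2 : (2:L) ≠ 0) (ha0 : a ≠ 0) (hb0 : b ≠ 0) (hab : a ^ 2 ≠ b ^ 2) (hc : c ≠ 0) (D : ℕ)
    {p q : L[X]} (hp : p ≠ 0) (hq : q ≠ 0)
    (heq : C c * ((X ^ 2 - C (a ^ 2)) * (X ^ 2 - C (b ^ 2))) ^ D * (q * q.map (τ : L →+* L)) =
      (X ^ 2 - C (a ^ 2)) * (p * p.map (τ : L →+* L))) : False := by
  classical
  have hmon : ∀ e : L, (X ^ 2 - C e : L[X]) ≠ 0 := fun e => X_pow_sub_C_ne_zero (by norm_num) e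
  have hroot : ∀ e : L, e ≠ 0 → rootMultiplicity e (X ^ 2 - C (e ^ 2) : L[X]) = 1 := by
    intro e he
    have : (X ^ 2 - C (e ^ 2) : L[X]) = (X - C e) * (X - C (-e)) := by
      simp only [map_pow, map_neg]; ring
    rw [this, rootMultiplicity_mul (by rw [← this]; exact hmon _), rootMultiplicity_X_sub_C_self,
      rootMultiplicity_X_sub_C, if_neg]
    intro h
    apply he
    have : (2:L) * e = 0 := by linear_combination h
    simpa [h2] using this
  have hroot' : ∀ e e' : L, e ^ 2 ≠ e' ^ 2 → rootMultiplicity e (X ^ 2 - C (e' ^ 2) : L[X]) = 0 := by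
    intro e e' he
    apply rootMultiplicity_eq_zero
    simpa [IsRoot, sub_eq_zero] using he
  have hconj : ∀ (e : L) (r : L[X]), τ e = e → rootMultiplicity e (r.map (τ : L →+* L)) = rootMultiplicity e r := by
    intro e r he
    have := eq_rootMultiplicity_map (p := r) (f := (τ : L →+* L)) τ.injective e
    rw [this]; simp [he]
  have hpm : p.map (τ : L →+* L) ≠ 0 := (Polynomial.map_ne_zero_iff τ.injective).2 hp
  have hqm : q.map (τ : L →+* L) ≠ 0 := (Polynomial.map_ne_zero_iff τ.injective).2 hq
  have hpow : ∀ (e : L) (r : L[X]) (n : ℕ), r ≠ 0 → rootMultiplicity e (r ^ n) = n * rootMultiplicity e r := by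
    intro e r n hr
    induction n with
    | zero => simp
    | succ n ih => rw [pow_succ, rootMultiplicity_mul (mul_ne_zero (pow_ne_zero _ hr) hr), ih]; ring
  have hH : ((X ^ 2 - C (a ^ 2)) * (X ^ 2 - C (b ^ 2)) : L[X]) ≠ 0 := mul_ne_zero (hmon _) (hmon _)
  have hc' : (C c : L[X]) ≠ 0 := by simpa using hc
  have main : ∀ e : L, τ e = e → D * (rootMultiplicity e (X ^ 2 - C (a ^ 2) : L[X]) +
      rootMultiplicity e (X ^ 2 - C (b ^ 2) : L[X])) + 2 * rootMultiplicity e q =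
      rootMultiplicity e (X ^ 2 - C (a ^ 2) : L[X]) + 2 * rootMultiplicity e p := by
    intro e he
    have := congrArg (rootMultiplicity e) heq
    rw [rootMultiplicity_mul (mul_ne_zero (mul_ne_zero hc' (pow_ne_zero _ hH)) (mul_ne_zero hq hqm)),
      rootMultiplicity_mul (mul_ne_zero hc' (pow_ne_zero _ hH)), hpow _ _ _ hH,
      rootMultiplicity_mul hH, rootMultiplicity_mul (mul_ne_zero hq hqm),
      rootMultiplicity_mul (mul_ne_zero (hmon _) (mul_ne_zero hp hpm)),
      rootMultiplicity_mul (mul_ne_zero hp hpm), hconj _ _ he, hconj _ _ he, rootMultiplicity_C] at this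
    omega
  have m1 := main a ha
  have m2 := main b hb
  rw [hroot a ha0, hroot' a b hab] at m1
  rw [hroot b hb0, hroot' b a hab.symm] at m2
  omega

end Parity

/-! ### The obstruction over the quadratic extension -/

section Core

/-- If `(s² - a²)(s² - b²)` is a norm from the fraction field of a UFD, with both factors nonzero,
`s` and `a` invariant and `2a`, `a ± b` units, then `s² - a²` is itself a unit times a norm. -/
theorem norm_in_frac {S Ω : Type*} [CommRing S] [IsDomain S] [UniqueFactorizationMonoid S]
    [Field Ω] [Algebra S Ω] [IsFractionRing S Ω] (τ : S ≃+* S) (hτ : ∀ x, τ (τ x) = x)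
    (T : Ω ≃+* Ω) (hT : ∀ e, T (algebraMap S Ω e) = algebraMap S Ω (τ e))
    {a b : S} (ha : τ a = a) (h2a : IsUnit (a - -a))
    (hab : IsUnit (a - b)) (hab' : IsUnit (a - -b)) (hba : IsUnit (-a - b))
    (hba' : IsUnit (-a - -b))
    {s Q : Ω} (hs : T s = s) (hsa : s ^ 2 - algebraMap S Ω a ^ 2 ≠ 0)
    (hsb : s ^ 2 - algebraMap S Ω b ^ 2 ≠ 0)
    (hQ : Q * T Q = (s ^ 2 - algebraMap S Ω a ^ 2) * (s ^ 2 - algebraMap S Ω b ^ 2)) :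
    ∃ (c : S) (z : Ω), IsUnit c ∧ s ^ 2 - algebraMap S Ω a ^ 2 = algebraMap S Ω c * (z * T z) := by
  have hinj : Function.Injective (algebraMap S Ω) := IsFractionRing.injective S Ω
  have hne : ∀ x : S, x ≠ 0 → algebraMap S Ω x ≠ 0 := fun x hx h => hx (hinj (by simpa using h))
  have hτ0 : ∀ x : S, x ≠ 0 → τ x ≠ 0 := fun x hx => by simpa using hx
  obtain ⟨A, B, hB0, hB, hA, hsAB⟩ : ∃ A B : S, B ≠ 0 ∧ τ B = B ∧ τ A = A ∧
      s = algebraMap S Ω A / algebraMap S Ω B := by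
    obtain ⟨A, B, hB, rfl⟩ := IsFractionRing.div_surjective (A := S) s
    have hB0 := nonZeroDivisors.ne_zero hB
    have e1 : algebraMap S Ω A / algebraMap S Ω B =
        algebraMap S Ω (A * τ B) / algebraMap S Ω (B * τ B) := by
      have := hne _ hB0
      have := hne _ (hτ0 _ hB0)
      simp only [map_mul]
      field_simp
    have hBB : τ (B * τ B) = B * τ B := by rw [map_mul, hτ, mul_comm]
    refine ⟨A * τ B, B * τ B, mul_ne_zero hB0 (hτ0 _ hB0), hBB, ?_, e1⟩
    rw [e1, map_div₀, hT, hT, hBB] at hs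
    exact hinj ((div_left_inj' (hne _ (mul_ne_zero hB0 (hτ0 _ hB0)))).1 hs)
  obtain ⟨q, r, hr, rfl⟩ := IsFractionRing.div_surjective (A := S) Q
  have hr0 := nonZeroDivisors.ne_zero hr
  have hB1 := hne _ hB0
  have hr1 := hne _ hr0
  have hr2 := hne _ (hτ0 _ hr0)
  have fa : s ^ 2 - algebraMap S Ω a ^ 2 =
      algebraMap S Ω ((A - a * B) * (A - (-a) * B)) / algebraMap S Ω B ^ 2 := by
    rw [hsAB]; simp only [map_mul, map_sub, map_neg]; field_simp; ring
  have fb : s ^ 2 - algebraMap S Ω b ^ 2 =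
      algebraMap S Ω ((A - b * B) * (A - (-b) * B)) / algebraMap S Ω B ^ 2 := by
    rw [hsAB]; simp only [map_mul, map_sub, map_neg]; field_simp; ring
  have na : (A - a * B) * (A - (-a) * B) ≠ 0 := by
    intro h; rw [h] at fa; simp at fa; exact hsa fa
  have nb : (A - b * B) * (A - (-b) * B) ≠ 0 := by
    intro h; rw [h] at fb; simp at fb; exact hsb fb
  have hH : (A - a * B) * (A - (-a) * B) * ((A - b * B) * (A - (-b) * B)) * (r * τ r) =
      (B ^ 2 * q) * τ (B ^ 2 * q) := by
    apply hinj
    rw [fa, fb, map_div₀, hT, hT] at hQ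
    rw [map_mul, map_mul, map_mul (τ), map_pow (τ), hB]
    simp only [map_mul (algebraMap S Ω), map_pow (algebraMap S Ω)] at hQ ⊢
    field_simp at hQ
    linear_combination -hQ
  have hH0 := mul_ne_zero (mul_ne_zero na nb) (mul_ne_zero hr0 (hτ0 _ hr0))
  obtain ⟨z, c, hc, hz⟩ := exists_norm τ hτ ((A - a * B) * (A - (-a) * B)) na
    (by simp only [map_mul, map_sub, map_neg, hA, hB, ha]) (by
      intro π hπ hπa
      refine even_mult hπ h2a hab hab' hba hba' _ A B (left_ne_zero_of_mul na)
        (right_ne_zero_of_mul na) (left_ne_zero_of_mul nb) (right_ne_zero_of_mul nb) rfl ?_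
      have h1 := congrArg (multiplicity π) hH
      rw [hH] at hH0
      have hBq := left_ne_zero_of_mul hH0
      rw [mult_mul hπ (mul_ne_zero na nb) (mul_ne_zero hr0 (hτ0 _ hr0)),
        mult_mul hπ hr0 (hτ0 _ hr0), mult_mul hπ hBq (hτ0 _ hBq), mult_conj τ hπa,
        mult_conj τ hπa] at h1
      exact ⟨multiplicity π (B ^ 2 * q) - multiplicity π r, by omega⟩)
  refine ⟨c, algebraMap S Ω z / algebraMap S Ω B, hc, ?_⟩
  rw [fa, hz, map_div₀, hT, hT, hB]
  simp only [map_mul]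
  field_simp

/-- Two generators of a purely transcendental extension of transcendence degree 2 are algebraically
independent. -/
lemma algebraicIndependent_of_generates {L Ω : Type*} [Field L] [Field Ω] [Algebra L Ω]
    [Algebra (MvPolynomial (Fin 2) L) Ω] [IsScalarTower L (MvPolynomial (Fin 2) L) Ω]
    [IsFractionRing (MvPolynomial (Fin 2) L) Ω] {s Q : Ω}
    (hgen : IntermediateField.adjoin L {s, Q} = ⊤) : AlgebraicIndependent L ![s, Q] := by
  have hrange : Set.range ![s, Q] = {s, Q} := by
    ext; simp [eq_comm, or_comm]
  have hgen' : IntermediateField.adjoin L (Set.range ![s, Q]) = ⊤ := by rw [hrange, hgen]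
  have halg : Algebra.IsAlgebraic (Algebra.adjoin L (Set.range ![s, Q])) Ω := by
    constructor
    intro x
    obtain ⟨r, hr, t, ht, rfl⟩ := IntermediateField.mem_adjoin_iff_div.1
      (hgen' ▸ IntermediateField.mem_top : x ∈ IntermediateField.adjoin L (Set.range ![s, Q]))
    rw [div_eq_mul_inv]
    exact (isAlgebraic_algebraMap (⟨r, hr⟩ : Algebra.adjoin L (Set.range ![s, Q]))).mul
      (isAlgebraic_algebraMap (⟨t, ht⟩ : Algebra.adjoin L (Set.range ![s, Q]))).inv
  have htb : IsTranscendenceBasis L ![s, Q] := by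
    apply Algebra.IsAlgebraic.isTranscendenceBasis_of_lift_le_trdeg_of_finite
    have : Algebra.IsAlgebraic (MvPolynomial (Fin 2) L) Ω :=
      (IsFractionRing.comap_isAlgebraic_iff (K := Ω)).2 inferInstance
    have : FaithfulSMul (MvPolynomial (Fin 2) L) Ω :=
      (faithfulSMul_iff_algebraMap_injective _ _).2 (IsFractionRing.injective _ _)
    have h1 := (IsTranscendenceBasis.mvPolynomial (Fin 2) L).algebraMap_comp (A := Ω)
    exact h1.lift_cardinalMk_eq_trdeg.le
  exact htb.1

lemma clear_denoms {E : Type*} [Field E] {h f c p p' q q' : E} {D : ℕ} (hc : c ≠ 0) (hq : q ≠ 0)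
    (hq' : q' ≠ 0) (hl : h ^ D = f / c * (p / q * (p' / q'))) :
    c * h ^ D * (q * q') = f * (p * p') := by
  rw [hl]; field_simp

/-- Over `E = L(s)`, with `Ω = E(Q)` and `Q * T Q = (s² - a²)(s² - b²)`, the element `s² - a²` is not
a constant times a norm: otherwise `descent` yields a relation in `L(s)` excluded by `parity`. -/
theorem not_const_mul_norm {L Ω : Type*} [Field L] [Field Ω] [Algebra L Ω]
    (h2 : (2 : L) ≠ 0) (τ : L ≃+* L) (hτ : ∀ x, τ (τ x) = x)
    {a b : L} (ha : τ a = a) (hb : τ b = b) (ha0 : a ≠ 0) (hb0 : b ≠ 0) (hab : a ^ 2 ≠ b ^ 2)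
    (T : Ω ≃+* Ω) (hTL : ∀ x : L, T (algebraMap L Ω x) = algebraMap L Ω (τ x))
    {s Q : Ω} (hs : T s = s)
    (hQ : Q * T Q = (s ^ 2 - algebraMap L Ω a ^ 2) * (s ^ 2 - algebraMap L Ω b ^ 2))
    (hgen : IntermediateField.adjoin L {s, Q} = ⊤) (hind : AlgebraicIndependent L ![s, Q])
    {c : L} (hc0 : c ≠ 0) {z : Ω}
    (hz : s ^ 2 - algebraMap L Ω a ^ 2 = algebraMap L Ω c * (z * T z)) : False := by
  have hstr : Transcendental L s := by simpa using hind.transcendental 0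
  have hQtr : Transcendental (Algebra.adjoin L (![s, Q] '' {0})) Q :=
    hind.transcendental_adjoin (s := {0}) (i := 1) (by simp)
  have hsinj : Function.Injective (Polynomial.aeval s : L[X] →ₐ[L] Ω) :=
    transcendental_iff_injective.1 hstr
  let _ : Algebra L[X] Ω := (Polynomial.aeval s : L[X] →ₐ[L] Ω).toRingHom.toAlgebra
  have hmap : ∀ p : L[X], algebraMap L[X] Ω p = Polynomial.aeval s p := fun _ => rfl
  have : FaithfulSMul L[X] Ω := (faithfulSMul_iff_algebraMap_injective _ _).2 hsinj
  let E := FractionRing L[X]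
  let _ : Algebra E Ω := FractionRing.liftAlgebra L[X] Ω
  have : IsScalarTower L[X] E Ω := FractionRing.isScalarTower_liftAlgebra L[X] Ω
  have hEmap : ∀ p : L[X], algebraMap E Ω (algebraMap L[X] E p) = Polynomial.aeval s p :=
    fun p => (IsScalarTower.algebraMap_apply L[X] E Ω p).symm
  have hQE : Transcendental E Q := by
    intro hQE
    have h1 : IsAlgebraic L[X] Q := (IsFractionRing.isAlgebraic_iff L[X] E Ω).2 hQE
    let s' : Algebra.adjoin L (![s, Q] '' {0}) :=
      ⟨s, Algebra.subset_adjoin ⟨0, rfl, rfl⟩⟩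
    have hs' : ∀ p : L[X], ((Polynomial.aeval s' p : Algebra.adjoin L (![s, Q] '' {0})) : Ω) =
        Polynomial.aeval s p := fun p => (Polynomial.aeval_algebraMap_apply Ω s' p).symm
    refine hQtr (h1.ringHom_of_comp_eq
      (Polynomial.aeval s' : L[X] →ₐ[L] Algebra.adjoin L (![s, Q] '' {0})).toRingHom (RingHom.id Ω) ?_ ?_)
    · intro p q hpq
      apply hsinj
      rw [← hs', ← hs']
      exact congrArg Subtype.val hpq
    · exact RingHom.ext fun p => hs' p
  have htop : IntermediateField.adjoin E {Q} = ⊤ := by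
    rw [eq_top_iff]
    intro x _
    have hx : x ∈ IntermediateField.adjoin L {s, Q} := hgen ▸ IntermediateField.mem_top
    induction hx using IntermediateField.adjoin_induction with
    | mem x hx =>
      rcases hx with rfl | rfl
      · have := (IntermediateField.adjoin E {Q}).algebraMap_mem (algebraMap L[X] E X)
        rwa [hEmap, aeval_X] at this
      · exact IntermediateField.mem_adjoin_simple_self E _
    | algebraMap x =>
      have := (IntermediateField.adjoin E {Q}).algebraMap_mem (algebraMap L[X] E (C x))
      rwa [hEmap, aeval_C] at this
    | add x y _ _ h1 h2 => exact add_mem (h1 trivial) (h2 trivial)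
    | inv x _ h1 => exact inv_mem (h1 trivial)
    | mul x y _ _ h1 h2 => exact mul_mem (h1 trivial) (h2 trivial)
  let τE : E ≃+* E := IsFractionRing.ringEquivOfRingEquiv (Polynomial.mapEquiv τ)
  have hτE : ∀ p : L[X], τE (algebraMap L[X] E p) = algebraMap L[X] E (p.map (τ : L →+* L)) := by
    intro p
    exact IsFractionRing.ringEquivOfRingEquiv_algebraMap _ _
  have hττ : ((τ : L →+* L).comp (τ : L →+* L)) = RingHom.id L := by ext; simp [hτ]
  have hτE2 : ∀ x, τE (τE x) = x := by
    intro x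
    obtain ⟨p, q, -, rfl⟩ := IsFractionRing.div_surjective (A := L[X]) x
    simp only [map_div₀, hτE, Polynomial.map_map, hττ, Polynomial.map_id]
  have hTp : ∀ p : L[X], T (Polynomial.aeval s p) = Polynomial.aeval s (p.map (τ : L →+* L)) := by
    intro p
    rw [Polynomial.aeval_def, Polynomial.aeval_def, Polynomial.eval₂_map]
    have := Polynomial.hom_eval₂ p (algebraMap L Ω) (T : Ω →+* Ω) s
    rw [RingEquiv.coe_toRingHom] at this
    rw [this, hs]
    congr 1
    ext x
    simp [hTL]
  have hTE : ∀ e, T (algebraMap E Ω e) = algebraMap E Ω (τE e) := by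
    intro x
    obtain ⟨p, q, -, rfl⟩ := IsFractionRing.div_surjective (A := L[X]) x
    simp only [map_div₀, hτE, hEmap, hTp]
  set h : L[X] := (X ^ 2 - Polynomial.C (a ^ 2)) * (X ^ 2 - Polynomial.C (b ^ 2)) with hh
  set f : L[X] := (X ^ 2 - Polynomial.C (a ^ 2)) with hf
  have hEinj : Function.Injective (algebraMap L[X] E) := IsFractionRing.injective _ _
  have hE0 : ∀ p : L[X], p ≠ 0 → algebraMap L[X] E p ≠ 0 :=
    fun p hp h => hp (hEinj (by simpa using h))
  have hf0 : f ≠ 0 := X_pow_sub_C_ne_zero (by norm_num) _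
  have hh0 : h ≠ 0 := mul_ne_zero hf0 (X_pow_sub_C_ne_zero (by norm_num) _)
  have hc1 : algebraMap L[X] E (Polynomial.C c) ≠ 0 := hE0 _ (by simpa using hc0)
  obtain ⟨D, l, hl0, hl⟩ := descent (E := E) (Ω := Ω) τE hτE2 T hTE
    (h := algebraMap L[X] E h) (by rw [hτE]; simp [hh, hf, ha, hb]) (hE0 _ hh0) (Q := Q)
    (by rw [hEmap, hQ]; simp [hh, hf]) hQE htop
    (f := algebraMap L[X] E f / algebraMap L[X] E (Polynomial.C c))
    (div_ne_zero (hE0 _ hf0) hc1) (z := z) (by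
      rw [map_div₀, hEmap, hEmap, div_eq_iff (by simpa using hc0), Polynomial.aeval_C]
      simp only [hf, map_sub, map_pow, Polynomial.aeval_X, Polynomial.aeval_C]
      rw [hz]; ring)
  obtain ⟨p, q, hq, rfl⟩ := IsFractionRing.div_surjective (A := L[X]) l
  have hq0 := nonZeroDivisors.ne_zero hq
  have hp0 : p ≠ 0 := by rintro rfl; simp at hl0
  refine parity τ ha hb h2 ha0 hb0 hab hc0 D hp0 hq0 ?_
  apply hEinj
  have hq1 := hE0 _ hq0
  have hq2 := hE0 _ ((Polynomial.map_ne_zero_iff (f := (τ : L →+* L)) τ.injective).2 hq0)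
  rw [map_div₀, hτE, hτE] at hl
  rw [← hf, ← hh]
  simp only [map_mul, map_pow]
  exact clear_denoms hc1 hq1 hq2 hl

/-- The function field `L(x₁, x₂)`, with conjugation on coefficients, is not generated over `L` by
an invariant element `s` and an element `Q` of norm `(s² - a²)(s² - b²)`. -/
theorem core {L Ω : Type*} [Field L] [Field Ω] [Algebra L Ω]
    [Algebra (MvPolynomial (Fin 2) L) Ω] [IsScalarTower L (MvPolynomial (Fin 2) L) Ω]
    [IsFractionRing (MvPolynomial (Fin 2) L) Ω]
    (h2 : (2 : L) ≠ 0) (τ : L ≃+* L) (hτ : ∀ x, τ (τ x) = x)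
    {a b : L} (ha : τ a = a) (hb : τ b = b) (ha0 : a ≠ 0) (hb0 : b ≠ 0) (hab : a ^ 2 ≠ b ^ 2)
    (T : Ω ≃+* Ω)
    (hT : ∀ e, T (algebraMap (MvPolynomial (Fin 2) L) Ω e) =
      algebraMap (MvPolynomial (Fin 2) L) Ω (MvPolynomial.map (τ : L →+* L) e))
    {s Q : Ω} (hs : T s = s)
    (hQ : Q * T Q = (s ^ 2 - algebraMap L Ω a ^ 2) * (s ^ 2 - algebraMap L Ω b ^ 2))
    (hgen : IntermediateField.adjoin L {s, Q} = ⊤) : False := by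
  have hind := algebraicIndependent_of_generates hgen
  have hsinj : Function.Injective (Polynomial.aeval s : L[X] →ₐ[L] Ω) :=
    transcendental_iff_injective.1 (by simpa using hind.transcendental 0)
  have hττ : ((τ : L →+* L).comp (τ : L →+* L)) = RingHom.id L := by ext; simp [hτ]
  have hne : ∀ e : L, s ^ 2 - algebraMap L Ω e ^ 2 ≠ 0 := by
    intro e he
    have h0 : (X ^ 2 - Polynomial.C (e ^ 2) : L[X]) ≠ 0 := X_pow_sub_C_ne_zero (by norm_num) _
    apply h0
    apply hsinj
    simpa using he
  have hunit : ∀ e : L, e ≠ 0 → IsUnit (MvPolynomial.C e : MvPolynomial (Fin 2) L) :=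
    fun e he => (isUnit_iff_ne_zero.2 he).map MvPolynomial.C
  have hCL : ∀ e : L, algebraMap (MvPolynomial (Fin 2) L) Ω (MvPolynomial.C e) = algebraMap L Ω e :=
    fun e => (IsScalarTower.algebraMap_apply L (MvPolynomial (Fin 2) L) Ω e).symm
  have hab1 : a - b ≠ 0 := fun h => hab (by linear_combination (a + b) * h)
  have hab2 : a + b ≠ 0 := fun h => hab (by linear_combination (a - b) * h)
  obtain ⟨c, z, hc, hz⟩ := norm_in_frac (S := MvPolynomial (Fin 2) L) (Ω := Ω)
    (MvPolynomial.mapEquiv (Fin 2) τ)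
    (by intro x; simp [MvPolynomial.map_map, hττ, MvPolynomial.map_id]) T (by intro e; rw [hT]; rfl)
    (a := MvPolynomial.C a) (b := MvPolynomial.C b) (by simp [ha])
    (by
      have := hunit (2 * a) (mul_ne_zero h2 ha0)
      convert this using 1; rw [two_mul, map_add]; ring)
    (by rw [← map_sub]; exact hunit _ hab1)
    (by rw [sub_neg_eq_add, ← map_add]; exact hunit _ hab2)
    (by rw [← neg_add', ← map_add, ← map_neg]; exact hunit _ (neg_ne_zero.2 hab2))
    (by
      rw [neg_sub_neg, ← map_sub]; exact hunit _ (by rw [← neg_sub]; exact neg_ne_zero.2 hab1))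
    hs (by rw [hCL]; exact hne a) (by rw [hCL]; exact hne b) (by rw [hCL, hCL]; exact hQ)
  obtain ⟨c, hc0, rfl⟩ : ∃ c' : L, c' ≠ 0 ∧ c = MvPolynomial.C c' := by
    obtain ⟨r, hr, h⟩ := MvPolynomial.isUnit_iff_eq_C_of_isReduced.1 hc
    exact ⟨r, hr.ne_zero, h⟩
  have hTL : ∀ x : L, T (algebraMap L Ω x) = algebraMap L Ω (τ x) := by
    intro x
    have := hT (MvPolynomial.C x)
    rw [MvPolynomial.map_C] at this
    rwa [hCL, hCL] at this
  rw [hCL, hCL] at hz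
  exact not_const_mul_norm h2 τ hτ ha hb ha0 hb0 hab T hTL hs hQ hgen hind hc0 hz

end Core

/-! ### Châtelet surfaces -/

section Bridge

/-- The situation of `core` arises from a Châtelet surface `t² = μw²(s² - a²)(s² - b²)p² + μc²` with
function field `M = k(x₁, x₂)`: over `L = k(m)`, `m² = μ`, the element
`Q = (t + mc) / (p · imw)` has norm `(s² - a²)(s² - b²)`, and `s`, `Q` generate `L(x₁, x₂)`. -/
theorem bridge {k L M Ω : Type*} [Field k] [Field L] [Field M] [Field Ω] [Algebra k L]
    [Algebra k M] [Algebra L Ω]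
    [Algebra (MvPolynomial (Fin 2) k) M] [IsFractionRing (MvPolynomial (Fin 2) k) M]
    [IsScalarTower k (MvPolynomial (Fin 2) k) M]
    [Algebra (MvPolynomial (Fin 2) L) Ω] [IsScalarTower L (MvPolynomial (Fin 2) L) Ω]
    [IsFractionRing (MvPolynomial (Fin 2) L) Ω]
    (h2 : (2 : k) ≠ 0) (τ : L ≃+* L) (hτ : ∀ x, τ (τ x) = x)
    (hτk : ∀ x : k, τ (algebraMap k L x) = algebraMap k L x)
    {m : L} {i μ w c : k} (hm : m ^ 2 = algebraMap k L μ) (hτm : τ m = -m) (hi : i ^ 2 = -1)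
    (hμ : μ ≠ 0) (hw : w ≠ 0) (hc : c ≠ 0)
    {a b : k} (ha0 : a ≠ 0) (hb0 : b ≠ 0) (hab : a ^ 2 ≠ b ^ 2)
    {s p t : M} (hp : p ≠ 0)
    (hrel : t ^ 2 = algebraMap k M (μ * w ^ 2) * ((s ^ 2 - algebraMap k M a ^ 2) *
      (s ^ 2 - algebraMap k M b ^ 2)) * p ^ 2 + algebraMap k M (μ * c ^ 2))
    (hgen : IntermediateField.adjoin k {s, p, t} = ⊤) : False := by
  have hkinj : Function.Injective (algebraMap k L) := (algebraMap k L).injective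
  have hk0 : ∀ x : k, x ≠ 0 → algebraMap k L x ≠ 0 := fun x hx => by simpa using hx
  -- extension of scalars `k(x₁, x₂) → L(x₁, x₂)`
  have hinj : Function.Injective ((algebraMap (MvPolynomial (Fin 2) L) Ω).comp
      (MvPolynomial.map (algebraMap k L))) :=
    (IsFractionRing.injective (MvPolynomial (Fin 2) L) Ω).comp
      (MvPolynomial.map_injective _ hkinj)
  let φ : M →+* Ω := IsFractionRing.lift hinj
  have hφ : ∀ x : MvPolynomial (Fin 2) k, φ (algebraMap _ M x) =
      algebraMap (MvPolynomial (Fin 2) L) Ω (MvPolynomial.map (algebraMap k L) x) :=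
    fun x => IsFractionRing.lift_algebraMap hinj x
  have hφk : ∀ x : k, φ (algebraMap k M x) = algebraMap L Ω (algebraMap k L x) := by
    intro x
    rw [IsScalarTower.algebraMap_apply k (MvPolynomial (Fin 2) k) M, hφ,
      IsScalarTower.algebraMap_apply L (MvPolynomial (Fin 2) L) Ω,
      MvPolynomial.algebraMap_eq, MvPolynomial.map_C, MvPolynomial.algebraMap_eq]
  let T : Ω ≃+* Ω := IsFractionRing.ringEquivOfRingEquiv (MvPolynomial.mapEquiv (Fin 2) τ)
  have hT : ∀ e, T (algebraMap (MvPolynomial (Fin 2) L) Ω e) =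
      algebraMap (MvPolynomial (Fin 2) L) Ω (MvPolynomial.map (τ : L →+* L) e) :=
    fun e => IsFractionRing.ringEquivOfRingEquiv_algebraMap _ _
  have hTL : ∀ x : L, T (algebraMap L Ω x) = algebraMap L Ω (τ x) := by
    intro x
    rw [IsScalarTower.algebraMap_apply L (MvPolynomial (Fin 2) L) Ω,
      IsScalarTower.algebraMap_apply L (MvPolynomial (Fin 2) L) Ω, hT,
      MvPolynomial.algebraMap_eq, MvPolynomial.map_C]
    rfl
  have hTφ : ∀ x, T (φ x) = φ x := by
    intro x
    obtain ⟨r, q, -, rfl⟩ := IsFractionRing.div_surjective (A := MvPolynomial (Fin 2) k) x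
    have hcomp : (τ : L →+* L).comp (algebraMap k L) = algebraMap k L := by ext; simp [hτk]
    simp only [map_div₀, hφ, hT, MvPolynomial.map_map, hcomp]
  set κ : k → Ω := fun x => algebraMap L Ω (algebraMap k L x) with hκ
  have hκ0 : ∀ x : k, x ≠ 0 → κ x ≠ 0 := fun x hx => by simpa [hκ] using hx
  set m' : Ω := algebraMap L Ω m with hm'
  have hTm : T m' = -m' := by rw [hm', hTL, hτm, map_neg]
  have hTκ : ∀ x, T (κ x) = κ x := fun x => by simp only [hκ, hTL, hτk]
  have hm2 : m' ^ 2 = κ μ := by rw [hm', ← map_pow, hm]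
  have hm0 : m' ≠ 0 := by
    intro h; rw [h] at hm2; apply hκ0 μ hμ; rw [← hm2]; simp
  have hi2 : κ i ^ 2 = -1 := by simp only [hκ, ← map_pow, hi]; simp
  have hi0 : κ i ≠ 0 := by intro h; rw [h] at hi2; simp at hi2
  have h2' : (2 : Ω) ≠ 0 := by
    have := hκ0 2 h2
    rw [hκ] at this
    beta_reduce at this
    rwa [map_ofNat, map_ofNat] at this
  have hw' := hκ0 w hw
  have hc' := hκ0 c hc
  have hp' : φ p ≠ 0 := by simpa using hp
  have hrel' : φ t ^ 2 = κ μ * κ w ^ 2 * ((φ s ^ 2 - κ a ^ 2) * (φ s ^ 2 - κ b ^ 2)) * φ p ^ 2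
      + κ μ * κ c ^ 2 := by
    have := congrArg φ hrel
    simpa [hφk, hκ] using this
  let Q : Ω := (φ t + m' * κ c) / (φ p * (κ i * m' * κ w))
  have hTQ : T Q = (φ t - m' * κ c) / (φ p * (-(κ i * m' * κ w))) := by
    simp only [Q, map_div₀, map_add, map_mul, hTφ, hTm, hTκ]
    congr 1 <;> ring
  have hQ : Q * T Q = (φ s ^ 2 - κ a ^ 2) * (φ s ^ 2 - κ b ^ 2) := by
    rw [hTQ, div_mul_div_comm, div_eq_iff (by
      refine mul_ne_zero (mul_ne_zero hp' ?_) (mul_ne_zero hp' (neg_ne_zero.2 ?_)) <;>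
      exact mul_ne_zero (mul_ne_zero hi0 hm0) hw')]
    set H := (φ s ^ 2 - κ a ^ 2) * (φ s ^ 2 - κ b ^ 2)
    linear_combination hrel' + (H * φ p ^ 2 * m' ^ 2 * κ w ^ 2) * hi2 -
      (κ c ^ 2 + H * φ p ^ 2 * κ w ^ 2) * hm2
  refine core (Ω := Ω) (a := algebraMap k L a) (b := algebraMap k L b)
    (by have := hk0 2 h2; rwa [map_ofNat] at this) τ hτ (hτk a) (hτk b) (hk0 a ha0) (hk0 b hb0)
    (by rw [← map_pow, ← map_pow]; exact fun h => hab (hkinj h)) T hT (s := φ s) (Q := Q)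
    (hTφ s) hQ ?_
  -- `L(s, Q)` contains `p` and `t`, hence all of `k(x₁, x₂)`
  set W := IntermediateField.adjoin L {φ s, Q} with hW
  have hLW : ∀ x : L, algebraMap L Ω x ∈ W := fun x => W.algebraMap_mem x
  have hκW : ∀ x : k, κ x ∈ W := fun x => hLW _
  have hsW : φ s ∈ W := IntermediateField.subset_adjoin _ _ (by simp)
  have hQW : Q ∈ W := IntermediateField.subset_adjoin _ _ (by simp)
  have hTQW : T Q ∈ W := by
    by_cases hQ0 : Q = 0
    · rw [hQ0, map_zero]; exact W.zero_mem
    · have : T Q = (φ s ^ 2 - κ a ^ 2) * (φ s ^ 2 - κ b ^ 2) / Q := by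
        rw [← hQ]; field_simp
      rw [this]
      exact div_mem (mul_mem (sub_mem (pow_mem hsW _) (pow_mem (hκW _) _))
        (sub_mem (pow_mem hsW _) (pow_mem (hκW _) _))) hQW
  have e1 : Q * (φ p * (κ i * m' * κ w)) = φ t + m' * κ c :=
    div_mul_cancel₀ _ (mul_ne_zero hp' (mul_ne_zero (mul_ne_zero hi0 hm0) hw'))
  have e2 : T Q * (φ p * (-(κ i * m' * κ w))) = φ t - m' * κ c := by
    rw [hTQ]
    exact div_mul_cancel₀ _ (mul_ne_zero hp' (neg_ne_zero.2 (mul_ne_zero (mul_ne_zero hi0 hm0) hw')))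
  have e3 : φ p * (κ i * κ w * (Q + T Q)) = 2 * κ c := by
    apply mul_left_cancel₀ hm0
    linear_combination e1 - e2
  have hpW : φ p ∈ W := by
    have hne : κ i * κ w * (Q + T Q) ≠ 0 := by
      intro h; rw [h, mul_zero] at e3; exact mul_ne_zero h2' hc' e3.symm
    rw [eq_div_of_mul_eq hne e3]
    have : (2 : Ω) ∈ W := ofNat_mem W 2
    exact div_mem (mul_mem this (hκW _)) (mul_mem (mul_mem (hκW _) (hκW _)) (add_mem hQW hTQW))
  have htW : φ t ∈ W := by
    rw [← sub_eq_iff_eq_add.2 e1]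
    exact sub_mem (mul_mem hQW (mul_mem hpW (mul_mem (mul_mem (hκW _) (hLW m)) (hκW _))))
      (mul_mem (hLW m) (hκW _))
  have hMW : ∀ x : M, φ x ∈ W := by
    intro x
    have hx : x ∈ IntermediateField.adjoin k {s, p, t} := hgen ▸ IntermediateField.mem_top
    induction hx using IntermediateField.adjoin_induction with
    | mem x hx => rcases hx with rfl | rfl | rfl <;> assumption
    | algebraMap x => rw [hφk]; exact hκW x
    | add x y _ _ h1 h2 => rw [map_add]; exact add_mem h1 h2
    | inv x _ h1 => rw [map_inv₀]; exact inv_mem h1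
    | mul x y _ _ h1 h2 => rw [map_mul]; exact mul_mem h1 h2
  have hpoly : ∀ x : MvPolynomial (Fin 2) L, algebraMap _ Ω x ∈ W := by
    intro x
    induction x using MvPolynomial.induction_on with
    | C x =>
      rw [← MvPolynomial.algebraMap_eq, ← IsScalarTower.algebraMap_apply]; exact hLW x
    | add x y h1 h2 => rw [map_add]; exact add_mem h1 h2
    | mul_X x j h =>
      rw [map_mul]
      refine mul_mem h ?_
      have := hMW (algebraMap (MvPolynomial (Fin 2) k) M (MvPolynomial.X j))
      rwa [hφ, MvPolynomial.map_X] at this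
  rw [eq_top_iff]
  intro x _
  obtain ⟨r, q, -, rfl⟩ := IsFractionRing.div_surjective (A := MvPolynomial (Fin 2) L) x
  exact div_mem (hpoly r) (hpoly q)

/-- The function field of the Châtelet surface `t² = μw²(s² - a²)(s² - b²)p² + μc²` over `k` is not
`k`-rational. The quadratic extension `k(√μ)` is modelled by `QuadraticAlgebra k μ 0`, with `star`
as conjugation. -/
theorem chatelet_not_rational {k : Type*} [Field k] {M : Type*} [Field M] [Algebra k M]
    (h2 : (2 : k) ≠ 0)
    {i μ w c : k} (hi : i ^ 2 = -1) (hμ : ¬ IsSquare μ) (hw : w ≠ 0) (hc : c ≠ 0)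
    {a b : k} (ha0 : a ≠ 0) (hb0 : b ≠ 0) (hab : a ^ 2 ≠ b ^ 2)
    {s p t : M} (hp : p ≠ 0)
    (hrel : t ^ 2 = algebraMap k M (μ * w ^ 2) * ((s ^ 2 - algebraMap k M a ^ 2) *
      (s ^ 2 - algebraMap k M b ^ 2)) * p ^ 2 + algebraMap k M (μ * c ^ 2))
    (hgen : IntermediateField.adjoin k {s, p, t} = ⊤) : ¬ IsKRational k M := by
  rintro ⟨e⟩
  have hfact : Fact (∀ r : k, r ^ 2 ≠ μ + 0 * r) :=
    ⟨fun r hr => hμ ⟨r, by rw [← pow_two, hr]; ring⟩⟩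
  have hμ0 : μ ≠ 0 := by rintro rfl; exact hμ ⟨0, by simp⟩
  refine bridge (k := k) (L := QuadraticAlgebra k μ 0)
    (M := FractionRing (MvPolynomial (Fin 2) k))
    (Ω := FractionRing (MvPolynomial (Fin 2) (QuadraticAlgebra k μ 0))) h2 starRingAut (fun x => star_star x)
    (fun x => ?_) (m := QuadraticAlgebra.omega) (i := i) (μ := μ) (w := w) (c := c)
    ?_ ?_ hi hμ0 hw hc ha0 hb0 hab
    (s := e s) (p := e p) (t := e t) (by simpa using hp) ?_ ?_
  · ext <;> simp
  · rw [pow_two, QuadraticAlgebra.omega_mul_omega_eq_mk]; rfl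
  · ext <;> simp
  · have := congrArg e hrel
    simpa using this
  · have h := congrArg (IntermediateField.map (e : M →ₐ[k] FractionRing (MvPolynomial (Fin 2) k))) hgen
    rw [IntermediateField.adjoin_map] at h
    rw [eq_top_iff]
    intro x _
    have hx : x ∈ IntermediateField.map (e : M →ₐ[k] FractionRing (MvPolynomial (Fin 2) k)) ⊤ :=
      ⟨e.symm x, trivial, by simp⟩
    rw [← h] at hx
    simpa [Set.image_insert_eq] using hx

end Bridge

/-! ### The fixed field of the involution -/

section Fixed

/-- Elements fixed by `ν` lie in `k(y/x, x², t)`, because `K = K₀ + K₀ x` for this subfield `K₀` and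
`ν` changes the sign of `x`. -/
lemma mem_adjoin_of_fixed {k K : Type*} [Field k] [Field K] [Algebra k K] (h2 : (2 : K) ≠ 0)
    {x y t : K} (hx : x ≠ 0) (hgen : IntermediateField.adjoin k {x, y, t} = ⊤)
    (ν : K ≃ₐ[k] K) (hνx : ν x = -x) (hνy : ν y = -y) (hνt : ν t = t) {z : K} (hz : ν z = z) :
    z ∈ IntermediateField.adjoin k {y / x, x ^ 2, t} := by
  set K₀ := IntermediateField.adjoin k {y / x, x ^ 2, t} with hK₀
  have hs : y / x ∈ K₀ := IntermediateField.subset_adjoin _ _ (by simp)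
  have hp : x ^ 2 ∈ K₀ := IntermediateField.subset_adjoin _ _ (by simp)
  have ht : t ∈ K₀ := IntermediateField.subset_adjoin _ _ (by simp)
  have hfix : ∀ z ∈ K₀, ν z = z := by
    intro z hz
    induction hz using IntermediateField.adjoin_induction with
    | mem z hz => rcases hz with rfl | rfl | rfl <;> simp [hνx, hνy, hνt]
    | algebraMap z => simp
    | add x y _ _ h1 h2 => rw [map_add, h1, h2]
    | inv x _ h1 => rw [map_inv₀, h1]
    | mul x y _ _ h1 h2 => rw [map_mul, h1, h2]
  have hdec : ∃ α ∈ K₀, ∃ β ∈ K₀, z = α + β * x := by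
    clear hz
    have hz : z ∈ IntermediateField.adjoin k {x, y, t} := hgen ▸ IntermediateField.mem_top
    induction hz using IntermediateField.adjoin_induction with
    | mem z hz =>
      rcases hz with rfl | rfl | rfl
      · exact ⟨0, zero_mem _, 1, one_mem _, by simp⟩
      · exact ⟨0, zero_mem _, _, hs, by field_simp; simp⟩
      · exact ⟨_, ht, 0, zero_mem _, by simp⟩
    | algebraMap z => exact ⟨_, K₀.algebraMap_mem z, 0, zero_mem _, by simp⟩
    | add z z' _ _ h1 h2 =>
      obtain ⟨α, hα, β, hβ, rfl⟩ := h1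
      obtain ⟨α', hα', β', hβ', rfl⟩ := h2
      exact ⟨_, add_mem hα hα', _, add_mem hβ hβ', by ring⟩
    | inv z _ h1 =>
      obtain ⟨α, hα, β, hβ, rfl⟩ := h1
      by_cases h0 : α - β * x = 0
      · refine ⟨(α + α)⁻¹, inv_mem (add_mem hα hα), 0, zero_mem _, ?_⟩
        rw [← sub_eq_zero.1 h0]; simp
      by_cases h1 : α + β * x = 0
      · exact ⟨0, zero_mem _, 0, zero_mem _, by rw [h1]; simp⟩
      have hN : α ^ 2 - β ^ 2 * x ^ 2 ∈ K₀ :=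
        sub_mem (pow_mem hα 2) (mul_mem (pow_mem hβ 2) hp)
      refine ⟨α / (α ^ 2 - β ^ 2 * x ^ 2), div_mem hα hN, -β / (α ^ 2 - β ^ 2 * x ^ 2),
        div_mem (neg_mem hβ) hN, ?_⟩
      have : α ^ 2 - β ^ 2 * x ^ 2 = (α - β * x) * (α + β * x) := by ring
      rw [this]
      field_simp
      ring
    | mul z z' _ _ h1 h2 =>
      obtain ⟨α, hα, β, hβ, rfl⟩ := h1
      obtain ⟨α', hα', β', hβ', rfl⟩ := h2
      exact ⟨α * α' + β * β' * x ^ 2, add_mem (mul_mem hα hα') (mul_mem (mul_mem hβ hβ') hp),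
        α * β' + β * α', add_mem (mul_mem hα hβ') (mul_mem hβ hα'), by ring⟩
  obtain ⟨α, hα, β, hβ, rfl⟩ := hdec
  rw [map_add, map_mul, hfix α hα, hfix β hβ, hνx] at hz
  have : 2 * (β * x) = 0 := by linear_combination -hz
  have : β * x = 0 := by simpa [h2] using this
  rw [this, add_zero]; exact hα

end Fixed

end Helpers

/-- With `C = u²v²w²μ⁹` and `ν` the involution `ν(x) = −x, ν(y) = −y, ν(t) = t` (the
involution of type 1 in Table 2), the fixed field of `⟨ν⟩` acting on `K_C` is not
`k`-rational. -/
theorem delPezzo2_quartic_quotient_type1_not_rational'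
    (k : Type*) [Field k] [CharZero k]
    (i : k) (hi : i ^ 2 = -1)
    (μ : k) (hμ : ¬ IsSquare μ)
    (u v w : k) (hu : u ≠ 0) (hv : v ≠ 0) (hw : w ≠ 0)
    (huvw : w ^ 2 = u ^ 2 + v ^ 2)
    (A B C : k)
    (hA : A = w ^ 2 * μ) (hB : B = (u ^ 2 - v ^ 2) * μ)
    (hC : C = u ^ 2 * v ^ 2 * w ^ 2 * μ ^ 9)
    -- K is the function field of the surface: K = k(x, y, t) with t² = f_C(x, y)
    (K : Type*) [Field K] [Algebra k K]
    (x y t : K)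
    (hind : AlgebraicIndependent k ![x, y])
    (hrel : t ^ 2 = algebraMap k K A * x ^ 4 + 2 * algebraMap k K B * x ^ 2 * y ^ 2
        + algebraMap k K A * y ^ 4 + algebraMap k K C)
    (hgen : IntermediateField.adjoin k {x, y, t} = ⊤)
    (ht : t ∉ IntermediateField.adjoin k ({x, y} : Set K))
    -- ν is the k-automorphism of order 2 with ν(x) = −x, ν(y) = −y, ν(t) = t
    (ν : K ≃ₐ[k] K)
    (hνx : ν x = -x) (hνy : ν y = -y) (hνt : ν t = t) :
    ¬ IsKRational k (IntermediateField.fixedField (Subgroup.closure {ν})) := by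
  rw [hA, hB, hC] at hrel
  have hK : ∀ e : k, e ≠ 0 → algebraMap k K e ≠ 0 := fun e he => by simpa using he
  have h2 : (2 : k) ≠ 0 := two_ne_zero
  have h2K : (2 : K) ≠ 0 := by have := hK 2 h2; rwa [map_ofNat] at this
  have hμ0 : μ ≠ 0 := by rintro rfl; exact hμ ⟨0, by simp⟩
  have hx : x ≠ 0 := by simpa using hind.ne_zero 0
  have hfixed : ∀ z : K, z ∈ IntermediateField.fixedField (Subgroup.closure {ν}) ↔ ν z = z := by
    intro z
    rw [IntermediateField.mem_fixedField_iff]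
    refine ⟨fun h => h ν (Subgroup.subset_closure rfl), fun h g hg => ?_⟩
    have hle : Subgroup.closure {ν} ≤ MulAction.stabilizer (K ≃ₐ[k] K) z := by
      rw [Subgroup.closure_le, Set.singleton_subset_iff]
      exact h
    exact hle hg
  have hi0 : i ≠ 0 := by rintro rfl; simp at hi
  have hw1 : (u - i * v) * (u + i * v) = w ^ 2 := by linear_combination -huvw - v ^ 2 * hi
  have hprod : (u - i * v) * (u + i * v) ≠ 0 := by rw [hw1]; exact pow_ne_zero 2 hw
  let s : IntermediateField.fixedField (Subgroup.closure {ν}) :=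
    ⟨y / x, (hfixed _).2 (by rw [map_div₀, hνx, hνy, neg_div_neg_eq])⟩
  let p : IntermediateField.fixedField (Subgroup.closure {ν}) :=
    ⟨x ^ 2, (hfixed _).2 (by rw [map_pow, hνx, neg_sq])⟩
  let t' : IntermediateField.fixedField (Subgroup.closure {ν}) := ⟨t, (hfixed _).2 hνt⟩
  refine chatelet_not_rational (i := i) (μ := μ) (w := w) (c := u * v * w * μ ^ 4)
    (a := i * (u - i * v) / w) (b := i * (u + i * v) / w) h2 hi hμ hw
    (mul_ne_zero (mul_ne_zero (mul_ne_zero hu hv) hw) (pow_ne_zero 4 hμ0))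
    (div_ne_zero (mul_ne_zero hi0 (left_ne_zero_of_mul hprod)) hw)
    (div_ne_zero (mul_ne_zero hi0 (right_ne_zero_of_mul hprod)) hw) ?_
    (s := s) (p := p) (t := t') ?_ ?_ ?_
  · intro h
    rw [div_pow, div_pow, div_left_inj' (pow_ne_zero 2 hw)] at h
    have : 4 * (u * v * i) = 0 := by linear_combination h + (4 * u * v * i) * hi
    simp [hu, hv, hi0] at this
  · intro h
    exact pow_ne_zero 2 hx (congrArg Subtype.val h)
  · apply Subtype.ext
    -- elementary symmetric functions of `a²` and `b²`
    have hsum : w ^ 2 * ((i * (u - i * v) / w) ^ 2 + (i * (u + i * v) / w) ^ 2) =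
        -(2 * (u ^ 2 - v ^ 2)) := by
      field_simp
      linear_combination (2 * u ^ 2 + 2 * v ^ 2 * (i ^ 2 - 1)) * hi
    have hmul : (i * (u - i * v) / w) ^ 2 * (i * (u + i * v) / w) ^ 2 = 1 := by
      have h1 : (i * (u - i * v) / w) * (i * (u + i * v) / w) = -1 := by
        field_simp
        linear_combination w ^ 2 * hi + i ^ 2 * hw1
      rw [← mul_pow, h1]; ring
    generalize i * (u - i * v) / w = a at hsum hmul ⊢
    generalize i * (u + i * v) / w = b at hsum hmul ⊢
    change t ^ 2 = algebraMap k K (μ * w ^ 2) *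
      (((y / x) ^ 2 - algebraMap k K a ^ 2) * ((y / x) ^ 2 - algebraMap k K b ^ 2)) * (x ^ 2) ^ 2
      + algebraMap k K (μ * (u * v * w * μ ^ 4) ^ 2)
    have hsumK := congrArg (algebraMap k K) hsum
    have hmulK := congrArg (algebraMap k K) hmul
    obtain ⟨q, hq⟩ : ∃ q, q = y / x := ⟨_, rfl⟩
    have hy : y = q * x := by rw [hq]; field_simp
    rw [hrel, ← hq, hy]
    simp only [map_mul, map_pow, map_sub, map_add, map_neg, map_one, map_ofNat] at hsumK hmulK ⊢
    linear_combination (algebraMap k K μ * x ^ 4 * q ^ 2) * hsumK -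
      (algebraMap k K μ * x ^ 4 * algebraMap k K w ^ 2) * hmulK
  · rw [eq_top_iff]
    intro z _
    have hz := mem_adjoin_of_fixed h2K hx hgen ν hνx hνy hνt ((hfixed z.1).1 z.2)
    have himg : ({y / x, x ^ 2, t} : Set K) =
        (IntermediateField.fixedField (Subgroup.closure {ν})).val '' {s, p, t'} := by
      simp [Set.image_insert_eq, s, p, t']
    rw [himg, ← IntermediateField.adjoin_map] at hz
    obtain ⟨z', hz', hzz⟩ := hz
    have : z' = z := Subtype.ext hzz
    exact this ▸ hz'
end
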